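/- arXiv:math/9905209 — 2 statements merged into one kernel-verified Lean document; each statement's English description precedes it below -/
import Mathlib

section
/- Every nontrivial finitely generated subgroup H of M(Ψ) admits a preferred presentation: there exist natural numbers m, r and elements w_1, …, w_m of the free group on generators x_1, …, x_m, y_1, …, y_r such that the assignment x_j ↦ w_j extends to an injective homomorphism from the free group on x_1, …, x_m into the free group on x_1, …, x_m, y_1, …, y_r, and H is isomorphic to the group with presentation ⟨s, x_1, …, x_m, y_1, …, y_r | s x_j s⁻¹ w_j⁻¹ (1 ≤ j ≤ m)⟩. -/
/-- Given `J ⊆ I`, the free factor `F = ⟨e_j : j ∈ J⟩` of the free group `G` on `I`. -/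
def freeFactor {I : Type} (J : Set I) : Subgroup (FreeGroup I) :=
  Subgroup.closure (FreeGroup.of '' J)

/-- The relators `t e_j t⁻¹ Ψ(e_j)⁻¹ (j ∈ J)` of the mapping torus `M(Ψ)` of an injective
homomorphism `Ψ : F → G` from the free factor `F = ⟨e_j : j ∈ J⟩` of the free group `G` on `I`;
the generator `none` plays the role of the stable letter `t`. -/
def mtRelsRel {I : Type} (J : Set I) (Ψ : freeFactor J →* FreeGroup I) :
    Set (FreeGroup (Option I)) :=
  Set.range fun j : J =>
    FreeGroup.of (none : Option I) * FreeGroup.of (some (j : I)) *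
      (FreeGroup.of (none : Option I))⁻¹ *
      (FreeGroup.map some
        (Ψ ⟨FreeGroup.of (j : I),
          Subgroup.subset_closure (Set.mem_image_of_mem _ j.2)⟩))⁻¹

/-- The mapping torus `M(Ψ) = ⟨t, eᵢ (i ∈ I) | t e_j t⁻¹ Ψ(e_j)⁻¹ (j ∈ J)⟩`, i.e. the HNN
extension `G ∗_F` with bonding maps the inclusion of `F` into `G` and `Ψ`. -/
abbrev MTRel {I : Type} (J : Set I) (Ψ : freeFactor J →* FreeGroup I) : Type :=
  PresentedGroup (mtRelsRel J Ψ)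

/-- The relators `s x_j s⁻¹ w_j⁻¹ (1 ≤ j ≤ m)` of a preferred presentation
`⟨s, x₁, …, x_m, y₁, …, y_r | s x_j s⁻¹ w_j⁻¹⟩`: the generator `none` is the stable letter `s`,
`some (Sum.inl j)` is `x_j` and `some (Sum.inr k)` is `y_k`. -/
def prefRels (m r : ℕ) (w : Fin m → FreeGroup (Fin m ⊕ Fin r)) :
    Set (FreeGroup (Option (Fin m ⊕ Fin r))) :=
  Set.range fun j : Fin m =>
    FreeGroup.of (none : Option (Fin m ⊕ Fin r)) * FreeGroup.of (some (Sum.inl j)) *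
      (FreeGroup.of (none : Option (Fin m ⊕ Fin r)))⁻¹ *
      (FreeGroup.map some (w j))⁻¹

/-!
Let `M` be the mapping torus, with stable letter `σ`, of an injection defined on the free factor
with basis `xₐ` of the free group with basis `xₐ`, `y_b`. The exponent sum of `σ` is a homomorphism
from `M` to `ℤ`, and its kernel is the ascending union of the conjugates `σ⁻ᵃ N σᵃ`, where `N` is
free on the `xₐ` and the `σᵏ y_b σ⁻ᵏ` with `k ≥ 0`, and `σ N σ⁻¹ ≤ N`. A finitely generated `H`
inside the kernel is conjugate into `N`, hence free. Any other `H` is, up to conjugacy, `⟨A, τ⟩`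
with `A ≤ N` finitely generated and `τ N τ⁻¹ ≤ N`; let `φ` be conjugation by `τ` on `N`.

Following Feighn and Handel, consider pairs `(X, l)` of a finitely generated `X ≤ N` and a finite
list `l` in `N` such that `φ X ≤ ⟨X, l⟩` and `⟨X, l⟩` generates the same `φ`-invariant subgroup as
`A`, and take one with `l` shortest. If the rank of `⟨X, l⟩` were less than `rank X + |l|`, folding
in the Cayley tree would, after changing `l`, produce `d ∈ l` identifying two `X`-orbits in a
connected `X`-invariant set with finitely many orbits. Moving `d` into `X` and replacing it by `φ d`
in `l` preserves the rank inequality and lowers the number of orbits, so that eventually `l` can be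
shortened. Hence a basis of `X` and `l`, `φ l`, `φ² l`, … together are free, by Hopficity, and this
says that `⟨A, τ⟩` is the HNN extension of the free group `⟨X, l⟩` along `φ : X → ⟨X, l⟩`.
-/

namespace MappingTorus

universe u

open Function
open scoped Pointwise

/-! ### Free groups are Hopfian -/

section Hopf

theorem exists_perm_forall_mul_eq {G : Type*} [Group G] (S : Set G) [Finite S] (c : G) :
    ∃ e : Equiv.Perm S, ∀ g h : S, c * g = h → e g = h := by
  obtain ⟨e, he⟩ := Equiv.Perm.exists_extending_pair
    (fun g : {g : S // c * (g : G) ∈ S} ↦ g.1) (fun g ↦ (⟨c * g.1, g.2⟩ : S))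
    Subtype.val_injective
    fun g h hgh ↦ Subtype.ext <| Subtype.ext <| mul_left_cancel <| congrArg Subtype.val hgh
  refine ⟨e, fun g h hgh ↦ ?_⟩
  have hg : c * (g : G) ∈ S := hgh ▸ h.2
  exact (he ⟨g, hg⟩).trans (Subtype.ext hgh)

variable {α : Type*}

theorem exists_freeGroup_perm_forall_mk_mul_eq (S : Set (FreeGroup α)) [Finite S] :
    ∃ ρ : FreeGroup α →* Equiv.Perm S, ∀ (a : α × Bool) (g h : S),
      FreeGroup.mk [a] * (g : FreeGroup α) = h → ρ (FreeGroup.mk [a]) g = h := by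
  choose e he using fun x : α ↦ exists_perm_forall_mul_eq S (FreeGroup.of x)
  refine ⟨FreeGroup.lift e, ?_⟩
  rintro ⟨x, _ | _⟩ g h hgh
  · change (FreeGroup.of x)⁻¹ * (g : FreeGroup α) = h at hgh
    have hg : e x h = g := he x h g (by rw [← hgh, mul_inv_cancel_left])
    change FreeGroup.lift e (FreeGroup.of x)⁻¹ g = h
    rw [map_inv, FreeGroup.lift_apply_of, ← hg, Equiv.Perm.inv_def, Equiv.symm_apply_apply]
  · change FreeGroup.lift e (FreeGroup.of x) g = h
    rw [FreeGroup.lift_apply_of]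
    exact he x g h hgh

-- `FreeGroup α` acts partially by left multiplication on the set of suffixes of a word `L`;
-- extending this to permutations gives a finite quotient in which `L` maps `1` to `mk L`.
instance residuallyFinite_freeGroup : Group.ResiduallyFinite (FreeGroup α) := by
  classical
  refine Group.residuallyFinite_of_forall_exists_finite_monoidHom fun w hw ↦ ?_
  let S : Set (FreeGroup α) := FreeGroup.mk '' {L | L ∈ w.toWord.tails}
  have : Finite S := ((List.finite_toSet _).image _).to_subtype
  have mk_mem : ∀ L, L <:+ w.toWord → FreeGroup.mk L ∈ S := fun L hL ↦
    ⟨L, (List.mem_tails _ _).2 hL, rfl⟩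
  obtain ⟨ρ, hρ⟩ := exists_freeGroup_perm_forall_mk_mul_eq S
  have apply_one : ∀ L, L <:+ w.toWord →
      (ρ (FreeGroup.mk L) ⟨1, mk_mem [] List.nil_suffix⟩ : FreeGroup α) = FreeGroup.mk L := by
    intro L
    induction L with
    | nil => intro _; rw [← FreeGroup.one_eq_mk, map_one, Equiv.Perm.one_apply]
    | cons a L ih =>
      intro hL
      have hsplit : FreeGroup.mk (a :: L) = FreeGroup.mk [a] * FreeGroup.mk L := by
        rw [FreeGroup.mul_mk, List.singleton_append]
      rw [hsplit, map_mul, Equiv.Perm.mul_apply]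
      refine congrArg Subtype.val (hρ a _ ⟨_, hsplit ▸ mk_mem _ hL⟩ ?_)
      rw [ih ((List.suffix_cons a L).trans hL)]
  refine ⟨Equiv.Perm S, inferInstance, inferInstance, ρ, fun hone ↦ hw ?_⟩
  rw [← FreeGroup.mk_toWord (x := w), ← apply_one w.toWord List.suffix_rfl, FreeGroup.mk_toWord,
    hone, Equiv.Perm.one_apply]

theorem finite_monoidHom_of_fg {G Q : Type*} [Group G] [Group.FG G] [Group Q] [Finite Q] :
    Finite (G →* Q) := by
  obtain ⟨S, hS⟩ := Group.FG.out (G := G)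
  refine Finite.of_injective (fun (f : G →* Q) (s : S) ↦ f s) fun f g hfg ↦ ?_
  exact MonoidHom.eq_of_eqOn_dense hS fun s hs ↦ congrFun hfg ⟨s, hs⟩

-- Precomposition with `f` permutes the finitely many homomorphisms to any given finite group, so
-- each of them kills the kernel of `f`.
theorem injective_of_surjective_of_residuallyFinite {G : Type*} [Group G] [Group.FG G]
    [Group.ResiduallyFinite G] (f : G →* G) (hf : Surjective f) : Injective f := by
  rw [injective_iff_map_eq_one]
  intro w hw
  refine Group.eq_one_iff_forall_finiteIndexNormalSubroup w fun N ↦ ?_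
  have : Finite (G →* G ⧸ N.toSubgroup) := finite_monoidHom_of_fg
  have precomp_injective : Injective fun u : G →* G ⧸ N.toSubgroup ↦ u.comp f :=
    fun _ _ ↦ (MonoidHom.cancel_right hf).1
  obtain ⟨u, hu⟩ := Finite.surjective_of_injective precomp_injective (QuotientGroup.mk' _)
  have : (QuotientGroup.mk' N.toSubgroup) w = 1 := by
    rw [← hu]; simp [hw]
  exact (QuotientGroup.eq_one_iff w).1 this

variable {β : Type*}

-- Homomorphisms to `ℤ/2` are counted by `2 ^ |α|` and `2 ^ |β|`.
theorem finite_and_card_le_of_surjective [Finite α] (f : FreeGroup α →* FreeGroup β)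
    (hf : Surjective f) : Finite β ∧ Nat.card β ≤ Nat.card α := by
  let Q := Multiplicative (ZMod 2)
  have hQ : Nat.card Q = 2 := by simp [Q]
  let restrict : (β → Q) → (α → Q) := fun u ↦ FreeGroup.lift.symm ((FreeGroup.lift u).comp f)
  have hinj : Injective restrict := fun u v huv ↦
    FreeGroup.lift.injective <| (MonoidHom.cancel_right hf).1 <| FreeGroup.lift.symm.injective huv
  have : Finite (β → Q) := Finite.of_injective restrict hinj
  have hβ : Finite β := by
    by_contra h
    have := not_finite_iff_infinite.1 h
    exact not_finite (β → Q)
  refine ⟨hβ, ?_⟩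
  have h := Nat.card_le_card_of_injective restrict hinj
  rw [Nat.card_fun, Nat.card_fun, hQ] at h
  exact (Nat.pow_le_pow_iff_right one_lt_two).1 h

theorem injective_of_surjective_of_card_eq [Finite α] [Finite β] (f : FreeGroup α →* FreeGroup β)
    (hf : Surjective f) (hcard : Nat.card α = Nat.card β) : Injective f := by
  obtain ⟨e⟩ := (Finite.card_eq (α := β) (β := α)).1 hcard.symm
  let E : FreeGroup β ≃* FreeGroup α := FreeGroup.freeGroupCongr e
  exact Injective.of_comp (f := E) <| injective_of_surjective_of_residuallyFinite
    (E.toMonoidHom.comp f) (E.surjective.comp hf)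

end Hopf

/-! ### Rank of a subgroup of a free group -/

section Rank

variable {G : Type*} [Group G]

theorem exists_lift_range_eq_of_fg {W : Subgroup G} (hW : W.FG) :
    ∃ (n : ℕ) (b : Fin n → G), (FreeGroup.lift b).range = W := by
  obtain ⟨S, rfl⟩ := hW
  refine ⟨S.card, fun i ↦ (S.equivFin.symm i : G), ?_⟩
  rw [FreeGroup.range_lift_eq_closure]
  congr 1
  exact (S.equivFin.symm.surjective.range_comp Subtype.val).trans Subtype.range_coe

theorem fg_map {G G' : Type*} [Group G] [Group G'] {W : Subgroup G} (hW : W.FG) (φ : G →* G') :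
    (W.map φ).FG :=
  (Subgroup.fg_iff_submonoid_fg _).2 (((Subgroup.fg_iff_submonoid_fg _).1 hW).map φ)

theorem fg_range_of_finite {α : Type*} [Finite α] (f : FreeGroup α →* G) : f.range.FG :=
  (Group.fg_iff_subgroup_fg _).1 inferInstance

variable [IsFreeGroup G] {α : Type*}

/-- The rank of a subgroup of a free group: the number of elements of a basis (`0` if the bases
are infinite). -/
noncomputable def rank (W : Subgroup G) : ℕ :=
  Nat.card (IsFreeGroup.Generators W)

/-- A homomorphism to a free group, with codomain restricted to its image, which is in turn
identified with the free group on a basis. -/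
noncomputable def toRangeBasis (f : FreeGroup α →* G) :
    FreeGroup α →* FreeGroup (IsFreeGroup.Generators f.range) :=
  (IsFreeGroup.mulEquiv f.range).symm.toMonoidHom.comp f.rangeRestrict

theorem toRangeBasis_surjective (f : FreeGroup α →* G) : Surjective (toRangeBasis f) :=
  (IsFreeGroup.mulEquiv f.range).symm.surjective.comp f.rangeRestrict_surjective

theorem rank_range_le [Finite α] (f : FreeGroup α →* G) : rank f.range ≤ Nat.card α :=
  (finite_and_card_le_of_surjective _ (toRangeBasis_surjective f)).2

theorem rank_range_of_injective (f : FreeGroup α →* G) (hf : Injective f) :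
    rank f.range = Nat.card α :=
  (Nat.card_congr <| Equiv.ofFreeGroupEquiv <|
    (MonoidHom.ofInjective hf).trans (IsFreeGroup.mulEquiv f.range).symm).symm

theorem injective_of_rank_range_eq [Finite α] (f : FreeGroup α →* G)
    (hf : rank f.range = Nat.card α) : Injective f := by
  have := (finite_and_card_le_of_surjective _ (toRangeBasis_surjective f)).1
  have h := injective_of_surjective_of_card_eq _ (toRangeBasis_surjective f) hf.symm
  exact fun x y hxy ↦ h <| congrArg (IsFreeGroup.mulEquiv f.range).symm (Subtype.ext hxy)

theorem exists_basis_of_fg {W : Subgroup G} (hW : W.FG) :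
    ∃ b : Fin (rank W) → G, Injective (FreeGroup.lift b) ∧ (FreeGroup.lift b).range = W := by
  obtain ⟨n, c, rfl⟩ := exists_lift_range_eq_of_fg hW
  set W := (FreeGroup.lift c).range
  have := (finite_and_card_le_of_surjective _ (toRangeBasis_surjective (FreeGroup.lift c))).1
  let E : FreeGroup (Fin (rank W)) ≃* W :=
    (FreeGroup.freeGroupCongr (Finite.equivFin _).symm).trans (IsFreeGroup.mulEquiv W)
  have hlift : FreeGroup.lift (fun i ↦ (E (FreeGroup.of i) : G)) =
      W.subtype.comp E.toMonoidHom := by ext; simp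
  refine ⟨fun i ↦ E (FreeGroup.of i), ?_, ?_⟩ <;> rw [hlift]
  · exact W.subtype_injective.comp E.injective
  · rw [MonoidHom.range_comp, MonoidHom.range_eq_top.2 E.surjective, ← MonoidHom.range_eq_map,
      Subgroup.range_subtype]

theorem rank_map_of_injective {G' : Type*} [Group G'] [IsFreeGroup G'] {W : Subgroup G}
    (hW : W.FG) (φ : G →* G') (hφ : Injective φ) : rank (W.map φ) = rank W := by
  obtain ⟨b, hb, hbW⟩ := exists_basis_of_fg hW
  have hmap : W.map φ = (φ.comp (FreeGroup.lift b)).range := by rw [MonoidHom.range_comp, hbW]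
  rw [hmap, rank_range_of_injective (φ.comp (FreeGroup.lift b)) (hφ.comp hb), Nat.card_fin]

end Rank

/-! ### Adjoining a list of elements to a subgroup -/

section Adjoin

variable {G : Type*} [Group G]

/-- The subgroup generated by a subgroup `X` and the members of a list `l`. A list rather than a
set, because its length (with repetitions) is to be compared with the rank of `adjoin X l`. -/
def adjoin (X : Subgroup G) (l : List G) : Subgroup G :=
  X ⊔ Subgroup.closure {x | x ∈ l}

variable {X K : Subgroup G} {l l' : List G}

theorem adjoin_le_iff : adjoin X l ≤ K ↔ X ≤ K ∧ ∀ x ∈ l, x ∈ K := by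
  rw [adjoin, sup_le_iff, Subgroup.closure_le]
  rfl

theorem le_adjoin (X : Subgroup G) (l : List G) : X ≤ adjoin X l :=
  le_sup_left

theorem mem_adjoin_of_mem (X : Subgroup G) {x : G} (hx : x ∈ l) : x ∈ adjoin X l :=
  (le_sup_right : _ ≤ adjoin X l) (Subgroup.subset_closure hx)

theorem adjoin_congr (X : Subgroup G) (h : ∀ x, x ∈ l ↔ x ∈ l') : adjoin X l = adjoin X l' := by
  simp only [adjoin, h]

theorem adjoin_nil (X : Subgroup G) : adjoin X [] = X := by
  simp [adjoin]

theorem adjoin_append (X : Subgroup G) (l l' : List G) :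
    adjoin X (l ++ l') = adjoin (adjoin X l) l' := by
  have hunion : {x | x ∈ l ++ l'} = {x | x ∈ l} ∪ {x | x ∈ l'} := by
    ext x
    exact List.mem_append
  rw [adjoin, adjoin, adjoin, hunion, Subgroup.closure_union, sup_assoc]

theorem adjoin_cons (X : Subgroup G) (c : G) (l : List G) :
    adjoin X (c :: l) = adjoin (adjoin X [c]) l :=
  adjoin_append X [c] l

theorem adjoin_cons_eq_adjoin_singleton (X : Subgroup G) (c : G) (l : List G) :
    adjoin X (c :: l) = adjoin (adjoin X l) [c] := by
  rw [← adjoin_append]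
  exact adjoin_congr X fun x ↦ by simp [or_comm]

theorem adjoin_mono {Y : Subgroup G} (h : X ≤ Y) (l : List G) : adjoin X l ≤ adjoin Y l :=
  sup_le_sup_right h _

theorem fg_adjoin (hX : X.FG) (l : List G) : (adjoin X l).FG :=
  hX.sup <| (Subgroup.fg_iff _).2 ⟨_, rfl, List.finite_toSet l⟩

theorem adjoin_bot_toList (A : Finset G) :
    adjoin ⊥ A.toList = Subgroup.closure (A : Set G) := by
  rw [adjoin, bot_sup_eq]
  congr 1
  ext x
  simp

theorem map_adjoin {G' : Type*} [Group G'] (φ : G →* G') (X : Subgroup G) (l : List G) :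
    (adjoin X l).map φ = adjoin (X.map φ) (l.map φ) := by
  have himage : φ '' {x | x ∈ l} = {x | x ∈ l.map φ} := by
    ext x
    simp
  rw [adjoin, adjoin, Subgroup.map_sup, MonoidHom.map_closure, himage]

theorem range_lift_sumElim {α γ : Type*} (a : α → G) (c : γ → G) :
    (FreeGroup.lift (Sum.elim a c)).range =
      (FreeGroup.lift a).range ⊔ (FreeGroup.lift c).range := by
  simp only [FreeGroup.range_lift_eq_closure, Set.Sum.elim_range, Subgroup.closure_union]

theorem range_lift_sumElim_get {α : Type*} {a : α → G} (hX : (FreeGroup.lift a).range = X)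
    (l : List G) : (FreeGroup.lift (Sum.elim a l.get)).range = adjoin X l := by
  rw [range_lift_sumElim, hX, FreeGroup.range_lift_eq_closure, adjoin, Set.range_list_get]

variable [IsFreeGroup G]

theorem rank_adjoin_le (hX : X.FG) (l : List G) : rank (adjoin X l) ≤ rank X + l.length := by
  obtain ⟨b, -, hbX⟩ := exists_basis_of_fg hX
  rw [← range_lift_sumElim_get hbX l]
  exact (rank_range_le _).trans (by simp)

theorem rank_adjoin_eq_iff_injective {n : ℕ} {b : Fin n → G} (hb : Injective (FreeGroup.lift b))
    (hbX : (FreeGroup.lift b).range = X) (l : List G) :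
    rank (adjoin X l) = rank X + l.length ↔ Injective (FreeGroup.lift (Sum.elim b l.get)) := by
  have hcard : rank X + l.length = Nat.card (Fin n ⊕ Fin l.length) := by
    rw [← hbX, rank_range_of_injective _ hb]
    simp
  rw [← range_lift_sumElim_get hbX, hcard]
  exact ⟨injective_of_rank_range_eq _, rank_range_of_injective _⟩

end Adjoin

/-! ### Ping-pong -/

section PingPong

-- `FreeGroup (Σ i, K i)` is the free product of the groups `FreeGroup (K i)`.
theorem injective_lift_sigma {ι G : Type*} [Group G] {K : ι → Type*} (u : ∀ i, K i → G)
    (hu : Injective (Monoid.CoprodI.lift fun i ↦ FreeGroup.lift (u i))) :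
    Injective (FreeGroup.lift fun s : Σ i, K i ↦ u s.1 s.2) := by
  let toCoprod : FreeGroup (Σ i, K i) →* Monoid.CoprodI fun i ↦ FreeGroup (K i) :=
    FreeGroup.lift fun s ↦ Monoid.CoprodI.of (FreeGroup.of s.2)
  let ofCoprod : Monoid.CoprodI (fun i ↦ FreeGroup (K i)) →* FreeGroup (Σ i, K i) :=
    Monoid.CoprodI.lift fun i ↦ FreeGroup.map (Sigma.mk i)
  have left_inv : LeftInverse ofCoprod toCoprod := DFunLike.congr_fun
    (show ofCoprod.comp toCoprod = MonoidHom.id _ by ext; simp [toCoprod, ofCoprod])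
  have hfactor : (FreeGroup.lift fun s : Σ i, K i ↦ u s.1 s.2) =
      (Monoid.CoprodI.lift fun i ↦ FreeGroup.lift (u i)).comp toCoprod := by
    ext
    simp [toCoprod]
  rw [hfactor]
  exact hu.comp left_inv.injective

theorem injective_lift_sumElim_of_ping_pong {G Y : Type*} {α γ : Type u} [Group G] [MulAction G Y]
    [Nonempty γ] (f : α → G) (g : γ → G) (P : Set Y) (hP : Pᶜ.Nonempty)
    (hf : ∀ x, x ≠ 1 → ∀ p ∈ P, FreeGroup.lift f x • p ∉ P)
    (hg : ∀ x, x ≠ 1 → ∀ p ∉ P, FreeGroup.lift g x • p ∈ P) :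
    Injective (FreeGroup.lift (Sum.elim f g)) := by
  let K : Bool → Type u := fun i ↦ bif i then γ else α
  let u : ∀ i, K i → G := Bool.rec f g
  let territory : Bool → Set Y := Bool.rec Pᶜ P
  have hinfinite : 3 ≤ Cardinal.mk (FreeGroup (K true)) :=
    have : Nonempty (K true) := ‹Nonempty γ›
    (Cardinal.natCast_lt_aleph0 (n := 3)).le.trans (Cardinal.aleph0_le_mk _)
  have hP' : P.Nonempty := by
    obtain ⟨c⟩ := ‹Nonempty γ›
    obtain ⟨p, hp⟩ := hP
    exact ⟨_, hg _ (FreeGroup.of_ne_one c) p hp⟩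
  have hinj := Monoid.CoprodI.lift_injective_of_ping_pong (fun i ↦ FreeGroup.lift (u i))
    (Or.inr ⟨true, hinfinite⟩) territory (by rintro (_ | _); exacts [hP, hP'])
    (by rintro (_ | _) (_ | _) h
        exacts [(h rfl).elim, disjoint_compl_left, disjoint_compl_right, (h rfl).elim])
    (by rintro (_ | _) (_ | _) h x hx
        · exact (h rfl).elim
        · rintro _ ⟨p, hp, rfl⟩
          exact hf x hx p hp
        · rintro _ ⟨p, hp, rfl⟩
          exact hg x hx p hp
        · exact (h rfl).elim)
  let toSigma : α ⊕ γ → Σ i, K i := Sum.elim (fun a ↦ ⟨false, a⟩) (fun c ↦ ⟨true, c⟩)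
  have toSigma_injective : Injective toSigma :=
    Injective.sumElim (fun a b h ↦ eq_of_heq (Sigma.mk.inj h).2)
      (fun a b h ↦ eq_of_heq (Sigma.mk.inj h).2)
      fun a c h ↦ Bool.false_ne_true (congrArg Sigma.fst h)
  have hfactor : FreeGroup.lift (Sum.elim f g) =
      (FreeGroup.lift fun s : Σ i, K i ↦ u s.1 s.2).comp (FreeGroup.map toSigma) := by
    ext (a | c) <;> simp [toSigma, u]
  rw [hfactor]
  exact (injective_lift_sigma u hinj).comp (FreeGroup.map_injective toSigma_injective)

end PingPong

/-! ### Free products of injective maps -/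

section FreeProduct

open FreeGroup

variable {κ β : Type*} [DecidableEq κ]

theorem toWord_mul_of_isReduced {x y : FreeGroup κ}
    (h : FreeGroup.IsReduced (x.toWord ++ y.toWord)) : (x * y).toWord = x.toWord ++ y.toWord := by
  rw [toWord_mul, h.reduce_eq]

theorem toWord_map_of_injective [DecidableEq β] {f : β → κ} (hf : Injective f) (x : FreeGroup β) :
    (FreeGroup.map f x).toWord = x.toWord.map fun a ↦ (f a.1, a.2) := by
  have hred : FreeGroup.IsReduced (x.toWord.map fun a ↦ (f a.1, a.2)) := by
    rw [FreeGroup.IsReduced, List.isChain_map]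
    exact isReduced_toWord.imp fun a b hab h ↦ hab (hf h)
  conv_lhs => rw [← mk_toWord (x := x), FreeGroup.map.mk, toWord_mk]
  exact hred.reduce_eq

theorem head?_toWord_map_mul {f : β → κ} (hf : Injective f) {x : FreeGroup β} (hx : x ≠ 1)
    {p : FreeGroup κ} (hp : ∀ a ∈ p.toWord.head?, a.1 ∉ Set.range f) :
    ∃ a ∈ (FreeGroup.map f x * p).toWord.head?, a.1 ∈ Set.range f := by
  classical
  have hred : FreeGroup.IsReduced ((FreeGroup.map f x).toWord ++ p.toWord) := by
    refine List.isChain_append.2 ⟨isReduced_toWord, isReduced_toWord, fun a ha c hc hac ↦ ?_⟩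
    rw [toWord_map_of_injective hf] at ha
    obtain ⟨b, -, rfl⟩ := List.mem_map.1 (List.mem_of_getLast? ha)
    exact (hp c hc ⟨b.1, hac⟩).elim
  obtain ⟨b, L, hL⟩ := List.exists_cons_of_ne_nil (mt toWord_eq_nil_iff.1 hx)
  rw [toWord_mul_of_isReduced hred, toWord_map_of_injective hf, hL]
  exact ⟨(f b.1, b.2), rfl, Set.mem_range_self _⟩

-- Ping-pong on the set of elements whose reduced word starts with a letter from `γ`.
theorem injective_lift_sumElim_map_inl_of_inr_of_nonempty {α β γ : Type u} [Nonempty γ]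
    {f : α → FreeGroup β} (hf : Injective (lift f)) :
    Injective (lift (Sum.elim (fun a ↦ FreeGroup.map Sum.inl (f a))
      (fun c ↦ FreeGroup.of (Sum.inr c)) : α ⊕ γ → FreeGroup (β ⊕ γ))) := by
  classical
  have hinl : lift (fun a ↦ FreeGroup.map (Sum.inl : β → β ⊕ γ) (f a)) =
      (FreeGroup.map Sum.inl).comp (lift f) := by ext; simp
  have hinr : lift (fun c ↦ FreeGroup.of (Sum.inr c : β ⊕ γ)) = FreeGroup.map Sum.inr := by
    ext; simp
  let P : Set (FreeGroup (β ⊕ γ)) := {p | ∃ a ∈ p.toWord.head?, a.1 ∈ Set.range Sum.inr}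
  refine injective_lift_sumElim_of_ping_pong _ _ P ⟨1, by simp [P]⟩ ?_ ?_
  · rintro x hx p ⟨a, ha, c, hac⟩ ⟨a', ha', c', hac'⟩
    have hfx : lift f x ≠ 1 := (map_ne_one_iff _ hf).2 hx
    have hp : ∀ b ∈ p.toWord.head?, b.1 ∉ Set.range Sum.inl := by
      rintro b hb ⟨d, hd⟩
      rw [Option.mem_unique hb ha, ← hac] at hd
      exact Sum.inl_ne_inr hd
    obtain ⟨b, hb, d, hbd⟩ := head?_toWord_map_mul Sum.inl_injective hfx hp
    rw [hinl] at ha'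
    rw [Option.mem_unique hb ha', ← hac'] at hbd
    exact Sum.inl_ne_inr hbd
  · intro x hx p hp
    rw [hinr]
    exact head?_toWord_map_mul Sum.inr_injective hx fun a ha hr ↦ hp ⟨a, ha, hr⟩

theorem injective_lift_sumElim_map_inl_of_inr {α β γ : Type u}
    {f : α → FreeGroup β} (hf : Injective (lift f)) :
    Injective (lift (Sum.elim (fun a ↦ FreeGroup.map Sum.inl (f a))
      (fun c ↦ FreeGroup.of (Sum.inr c)) : α ⊕ γ → FreeGroup (β ⊕ γ))) := by
  let enlarge {δ : Type u} : FreeGroup (δ ⊕ γ) →* FreeGroup (δ ⊕ Option γ) :=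
    FreeGroup.map (Sum.map id some)
  have enlarge_injective {δ : Type u} : Injective (enlarge (δ := δ)) :=
    FreeGroup.map_injective (injective_id.sumMap (Option.some_injective γ))
  refine Injective.of_comp (f := enlarge) ?_
  have hcomm : enlarge.comp (lift (Sum.elim (fun a ↦ FreeGroup.map Sum.inl (f a))
        (fun c ↦ FreeGroup.of (Sum.inr c)) : α ⊕ γ → FreeGroup (β ⊕ γ))) =
      (lift (Sum.elim (fun a ↦ FreeGroup.map Sum.inl (f a))
        (fun c ↦ FreeGroup.of (Sum.inr c)) : α ⊕ Option γ → FreeGroup (β ⊕ Option γ))).comp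
        enlarge := by
    ext (a | c) <;> simp [enlarge, FreeGroup.map.comp, Function.comp_def]
  rw [← MonoidHom.coe_comp, hcomm]
  exact (injective_lift_sumElim_map_inl_of_inr_of_nonempty hf).comp enlarge_injective

-- A basis of `W'` is a family of words in a basis `b` of `W`, so together with `c` it is the image
-- of a basis under the injective map `W' * ⟨c⟩ → W * ⟨c⟩`.
theorem rank_adjoin_singleton_of_le {G : Type*} [Group G] [IsFreeGroup G] {W' W : Subgroup G}
    (h : W' ≤ W) (hW' : W'.FG) (hW : W.FG) {c : G}
    (hc : rank (adjoin W [c]) = rank W + 1) : rank (adjoin W' [c]) = rank W' + 1 := by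
  obtain ⟨b, hb, hbW⟩ := exists_basis_of_fg hW
  obtain ⟨b', hb', hbW'⟩ := exists_basis_of_fg hW'
  have hinj : Injective (lift (Sum.elim b [c].get)) := (rank_adjoin_eq_iff_injective hb hbW _).1 hc
  have hmem : ∀ i, b' i ∈ (lift b).range := by
    intro i
    rw [hbW]
    apply h
    rw [← hbW']
    exact ⟨FreeGroup.of i, lift_apply_of⟩
  choose u hu using hmem
  have hbu : (lift b).comp (lift u) = lift b' := by ext i; simp [hu]
  have hu_inj : Injective (lift u) := Injective.of_comp (f := lift b) (by
    rw [← MonoidHom.coe_comp, hbu]; exact hb')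
  refine (rank_adjoin_eq_iff_injective hb' hbW' [c]).2 ?_
  have hrestrict : (lift (Sum.elim b [c].get)).comp (FreeGroup.map Sum.inl) = lift b := by
    ext; simp
  have hfactor : lift (Sum.elim b' [c].get) = (lift (Sum.elim b [c].get)).comp
      (lift (Sum.elim (fun a ↦ FreeGroup.map Sum.inl (u a)) fun c ↦ FreeGroup.of (Sum.inr c))) := by
    ext (i | i)
    · simpa [hu] using (DFunLike.congr_fun hrestrict (u i)).symm
    · simp
  rw [hfactor]
  exact hinj.comp (injective_lift_sumElim_map_inl_of_inr hu_inj)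

end FreeProduct

/-! ### Connected subsets of the Cayley tree -/

section CayleyTree

variable {κ : Type*}

/-- The generator or inverse of a generator of `FreeGroup κ` encoded by `a`, that is, the label of
an edge of the Cayley tree. -/
abbrev letter (a : κ × Bool) : FreeGroup κ :=
  FreeGroup.mk [a]

/-- The label of an edge traversed in the opposite direction. -/
abbrev invLetter (a : κ × Bool) : κ × Bool :=
  (a.1, !a.2)

theorem letter_invLetter (a : κ × Bool) : letter (invLetter a) = (letter a)⁻¹ := by
  rw [FreeGroup.inv_mk]
  rfl

/-- The vertices `x` and `y` of the Cayley tree are joined by an edge path with vertices in `S`. -/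
def ReachableIn (S : Set (FreeGroup κ)) : FreeGroup κ → FreeGroup κ → Prop :=
  Relation.ReflTransGen fun x y ↦ x ∈ S ∧ y ∈ S ∧ ∃ a, y = x * letter a

/-- `S` spans a connected subgraph, hence a (possibly empty) subtree, of the Cayley tree. -/
def IsConnectedSet (S : Set (FreeGroup κ)) : Prop :=
  ∀ x ∈ S, ∀ y ∈ S, ReachableIn S x y

variable {S T : Set (FreeGroup κ)} {x y z : FreeGroup κ}

theorem ReachableIn.symm (h : ReachableIn S x y) : ReachableIn S y x := by
  have : Std.Symm fun x y ↦ x ∈ S ∧ y ∈ S ∧ ∃ a, y = x * letter a := by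
    refine ⟨?_⟩
    rintro x _ ⟨hx, hy, a, rfl⟩
    exact ⟨hy, hx, invLetter a, by rw [letter_invLetter, mul_inv_cancel_right]⟩
  exact Relation.ReflTransGen.stdSymm.symm _ _ h

theorem ReachableIn.trans (h : ReachableIn S x y) (h' : ReachableIn S y z) : ReachableIn S x z :=
  Relation.ReflTransGen.trans h h'

theorem ReachableIn.mono (hST : S ⊆ T) (h : ReachableIn S x y) : ReachableIn T x y :=
  Relation.ReflTransGen.mono (fun _ _ ⟨hx, hy, hxy⟩ ↦ ⟨hST hx, hST hy, hxy⟩) _ _ h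

theorem ReachableIn.step {a : κ × Bool} (hx : x ∈ S) (hy : x * letter a ∈ S) :
    ReachableIn S x (x * letter a) :=
  Relation.ReflTransGen.single ⟨hx, hy, a, rfl⟩

theorem ReachableIn.mul_left {w : FreeGroup κ} (hw : ∀ s ∈ S, w * s ∈ S)
    (h : ReachableIn S x y) : ReachableIn S (w * x) (w * y) :=
  Relation.ReflTransGen.lift (w * ·)
    (fun _ _ ⟨hx, hy, a, hxy⟩ ↦ ⟨hw _ hx, hw _ hy, a, by rw [hxy, mul_assoc]⟩) _ _ h

theorem isConnectedSet_of_reachableIn (u : FreeGroup κ) (h : ∀ x ∈ S, ReachableIn S u x) :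
    IsConnectedSet S :=
  fun x hx y hy ↦ (h x hx).symm.trans (h y hy)

theorem subset_subgroup_mul {G : Type*} [Group G] (W : Subgroup G) (S : Set G) :
    S ⊆ (W : Set G) * S :=
  Set.subset_mul_right S W.one_mem

theorem mul_mem_subgroup_mul {G : Type*} [Group G] {W : Subgroup G} {S : Set G} {w s : G}
    (hw : w ∈ W) (hs : s ∈ (W : Set G) * S) : w * s ∈ (W : Set G) * S := by
  have := Set.mul_mem_mul (SetLike.mem_coe.2 hw) hs
  rwa [← mul_assoc, coe_mul_coe] at this

/-- The translate of `S` by `c` meets `S`. -/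
def Meets {G : Type*} [Mul G] (S : Set G) (c : G) : Prop :=
  ∃ u ∈ S, c * u ∈ S

theorem reachableIn_adjoin_mul {X : Subgroup (FreeGroup κ)} (hS : IsConnectedSet S)
    (hXS : (X : Set (FreeGroup κ)) * S ⊆ S) {l : List (FreeGroup κ)} (hl : ∀ c ∈ l, Meets S c)
    {u w : FreeGroup κ} (hu : u ∈ S) (hw : w ∈ adjoin X l) :
    ReachableIn ((adjoin X l : Set (FreeGroup κ)) * S) u (w * u) := by
  have hSY := subset_subgroup_mul (adjoin X l) S
  let K : Subgroup (FreeGroup κ) :=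
    { carrier := {w | w ∈ adjoin X l ∧ ReachableIn ((adjoin X l : Set (FreeGroup κ)) * S) u (w * u)}
      one_mem' := ⟨one_mem _, by rw [one_mul]; exact Relation.ReflTransGen.refl⟩
      mul_mem' := by
        rintro a b ⟨ha, ha'⟩ ⟨hb, hb'⟩
        refine ⟨mul_mem ha hb, ha'.trans ?_⟩
        rw [mul_assoc]
        exact hb'.mul_left fun s ↦ mul_mem_subgroup_mul ha
      inv_mem' := by
        rintro a ⟨ha, ha'⟩
        have h := ha'.mul_left fun s ↦ mul_mem_subgroup_mul (inv_mem ha)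
        rw [inv_mul_cancel_left] at h
        exact ⟨inv_mem ha, h.symm⟩ }
  have hK : adjoin X l ≤ K := by
    refine adjoin_le_iff.2 ⟨fun x hx ↦ ⟨le_adjoin X l hx, ?_⟩,
      fun c hc ↦ ⟨mem_adjoin_of_mem X hc, ?_⟩⟩
    · exact (hS u hu _ (hXS (Set.mul_mem_mul hx hu))).mono hSY
    · obtain ⟨v, hv, hcv⟩ := hl c hc
      exact ((hS u hu _ hcv).mono hSY).trans <|
        ((hS v hv u hu).mono hSY).mul_left fun s ↦ mul_mem_subgroup_mul (mem_adjoin_of_mem X hc)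
  exact (hK hw).2

theorem IsConnectedSet.adjoin_mul {X : Subgroup (FreeGroup κ)} (hS : IsConnectedSet S)
    (hXS : (X : Set (FreeGroup κ)) * S ⊆ S) {l : List (FreeGroup κ)} (hl : ∀ c ∈ l, Meets S c) :
    IsConnectedSet ((adjoin X l : Set (FreeGroup κ)) * S) := by
  rintro _ ⟨w, hw, u, hu, rfl⟩ _ ⟨w', hw', u', hu', rfl⟩
  have htranslate : ReachableIn _ (w' * u) (w' * u') :=
    ((hS u hu u' hu').mono (subset_subgroup_mul (adjoin X l) S)).mul_left
      fun s ↦ mul_mem_subgroup_mul hw'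
  exact ((reachableIn_adjoin_mul hS hXS hl hu hw).symm.trans
    (reachableIn_adjoin_mul hS hXS hl hu hw')).trans htranslate

/-- The edge that leaves `p` with label `a` leads out of `S`. -/
def IsExit (S : Set (FreeGroup κ)) (p : FreeGroup κ) (a : κ × Bool) : Prop :=
  p ∈ S ∧ p * letter a ∉ S

theorem IsExit.mul_left {W : Subgroup (FreeGroup κ)} (hWS : (W : Set (FreeGroup κ)) * S ⊆ S)
    {w p : FreeGroup κ} {a : κ × Bool} (hw : w ∈ W) (h : IsExit S p a) : IsExit S (w * p) a := by
  refine ⟨hWS (Set.mul_mem_mul hw h.1), fun hmem ↦ h.2 ?_⟩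
  have := hWS (Set.mul_mem_mul (W.inv_mem hw) hmem)
  rwa [mul_assoc, inv_mul_cancel_left] at this

end CayleyTree

/-! ### Half-trees -/

section HalfTree

variable {κ : Type*} [DecidableEq κ] {p q g : FreeGroup κ} {a b : κ × Bool}

theorem toWord_mul_letter (g : FreeGroup κ) (b : κ × Bool) :
    (g * letter b).toWord = g.toWord ++ [b] ∨
      g.toWord = (g * letter b).toWord ++ [invLetter b] := by
  by_cases hred : FreeGroup.IsReduced (g.toWord ++ [b])
  · exact Or.inl (toWord_mul_of_isReduced (y := letter b) hred)
  right
  obtain ⟨c, hc, hcb⟩ : ∃ c ∈ g.toWord.getLast?, c = invLetter b := by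
    by_contra! hlast
    refine hred (List.isChain_append.2
      ⟨FreeGroup.isReduced_toWord, List.isChain_singleton b, fun c hc d hd hcd ↦ ?_⟩)
    obtain rfl : b = d := by simpa using hd
    by_contra hne
    exact hlast c hc (Prod.ext hcd (by simpa [Bool.eq_not] using hne))
  obtain ⟨L, hL⟩ := List.getLast?_eq_some_iff.1 hc
  rw [hcb] at hL
  have hgb : g * letter b = FreeGroup.mk L := by
    rw [← FreeGroup.mk_toWord (x := g), hL, ← FreeGroup.mul_mk, ← letter,
      letter_invLetter, inv_mul_cancel_right]
  have hLred : FreeGroup.IsReduced L :=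
    List.IsChain.left_of_append (hL ▸ FreeGroup.isReduced_toWord (x := g))
  rw [hgb, FreeGroup.toWord_mk, hLred.reduce_eq, hL]

/-- The vertices of the Cayley tree beyond the edge that leaves `p` with label `a`. -/
def halfTree (p : FreeGroup κ) (a : κ × Bool) : Set (FreeGroup κ) :=
  {g | p⁻¹ * g ∈ FreeGroup.startsWith a}

theorem self_notMem_halfTree (p : FreeGroup κ) (a : κ × Bool) : p ∉ halfTree p a := fun h ↦
  FreeGroup.startsWith.ne_one _ h (inv_mul_cancel p)

theorem mul_mem_halfTree_mul_iff (c : FreeGroup κ) :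
    c * g ∈ halfTree (c * p) a ↔ g ∈ halfTree p a := by
  simp only [halfTree, Set.mem_ofPred_eq, mul_inv_rev, mul_assoc, inv_mul_cancel_left]

theorem eq_of_notMem_halfTree_of_mul_letter_mem (hg : g ∉ halfTree p a)
    (hgb : g * letter b ∈ halfTree p a) : g = p ∧ b = a := by
  simp only [halfTree, FreeGroup.startsWith, Set.mem_ofPred_eq, ← mul_assoc] at hg hgb
  rw [eq_comm, ← inv_mul_eq_one, ← FreeGroup.toWord_eq_nil_iff]
  rcases toWord_mul_letter (p⁻¹ * g) b with h | h
  · cases hL : (p⁻¹ * g).toWord <;> simp_all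
  · cases hL : (p⁻¹ * g * letter b).toWord <;> simp_all

theorem mem_halfTree_iff_notMem_halfTree_invLetter :
    g ∈ halfTree p a ↔ g ∉ halfTree (p * letter a) (invLetter a) := by
  obtain ⟨x, rfl⟩ : ∃ x, g = p * letter a * x := ⟨(p * letter a)⁻¹ * g, by group⟩
  simp only [halfTree, Set.mem_ofPred_eq, inv_mul_cancel_left, mul_assoc]
  rw [← mul_assoc p, inv_mul_cancel_left]
  refine ⟨fun h h' ↦ ?_, FreeGroup.startsWith_mk_mul x⟩
  obtain ⟨L, hL⟩ : ∃ L, x.toWord = invLetter a :: L := by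
    simpa [FreeGroup.startsWith, ← List.head?_eq_getElem?, List.head?_eq_some_iff] using h'
  have hred : FreeGroup.IsReduced (invLetter a :: L) := hL ▸ FreeGroup.isReduced_toWord
  have hax : letter a * x = FreeGroup.mk L := by
    rw [← FreeGroup.mk_toWord (x := x), hL, ← List.singleton_append, ← FreeGroup.mul_mk,
      ← letter, letter_invLetter, mul_inv_cancel_left]
  have hhead : L[0]? = some a := by
    rwa [hax, FreeGroup.startsWith, Set.mem_ofPred_eq, FreeGroup.toWord_mk,
      FreeGroup.IsReduced.reduce_eq (L := L) (List.IsChain.tail hred)] at h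
  obtain ⟨L', rfl⟩ : ∃ L', L = a :: L' := by
    simpa [← List.head?_eq_getElem?, List.head?_eq_some_iff] using hhead
  simpa using (FreeGroup.isReduced_cons_cons.1 hred).1

theorem notMem_halfTree_of_reachableIn {S : Set (FreeGroup κ)} {x y : FreeGroup κ}
    (h : ReachableIn S x y) (hS : q ∈ S → q * letter b ∉ S) (hx : x ∉ halfTree q b) :
    y ∉ halfTree q b := by
  induction h with
  | refl => exact hx
  | tail _ hstep ih =>
    obtain ⟨hz, hy, c, rfl⟩ := hstep
    intro hmem
    obtain ⟨rfl, rfl⟩ := eq_of_notMem_halfTree_of_mul_letter_mem ih hmem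
    exact hS hz hy

theorem reachableIn_halfTree {x : FreeGroup κ} (hx : x ∈ halfTree p a) :
    ReachableIn (halfTree p a) (p * letter a) x := by
  have hprefix : ∀ L : List (κ × Bool), FreeGroup.IsReduced (a :: L) →
      ReachableIn (halfTree p a) (p * letter a) (p * FreeGroup.mk (a :: L)) := by
    intro L
    induction L using List.reverseRecOn with
    | nil => exact fun _ ↦ Relation.ReflTransGen.refl
    | append_singleton L b ih =>
      intro hred
      have hmem {L' : List (κ × Bool)} (h : FreeGroup.IsReduced (a :: L')) :
          p * FreeGroup.mk (a :: L') ∈ halfTree p a := by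
        simp [halfTree, FreeGroup.startsWith, h.reduce_eq]
      have hred' : FreeGroup.IsReduced (a :: L) :=
        List.IsChain.left_of_append (l₁ := a :: L) (l₂ := [b]) hred
      have hsucc : p * FreeGroup.mk (a :: (L ++ [b])) = p * FreeGroup.mk (a :: L) * letter b := by
        rw [mul_assoc, FreeGroup.mul_mk, List.cons_append]
      rw [hsucc]
      exact (ih hred').trans (.step (hmem hred') (hsucc ▸ hmem hred))
  obtain ⟨L, hL⟩ : ∃ L, (p⁻¹ * x).toWord = a :: L := by
    simpa [halfTree, FreeGroup.startsWith, ← List.head?_eq_getElem?, List.head?_eq_some_iff]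
      using hx
  have h := hprefix L (hL ▸ FreeGroup.isReduced_toWord)
  rwa [← hL, FreeGroup.mk_toWord, mul_inv_cancel_left] at h

variable {S : Set (FreeGroup κ)}

theorem IsExit.notMem_halfTree (h : IsExit S p a) (hS : IsConnectedSet S) {x : FreeGroup κ}
    (hx : x ∈ S) : x ∉ halfTree p a :=
  notMem_halfTree_of_reachableIn (hS p h.1 x hx) (fun _ ↦ h.2) (self_notMem_halfTree p a)

theorem IsExit.disjoint_halfTree (hp : IsExit S p a) (hq : IsExit S q b) (hS : IsConnectedSet S)
    (hne : ¬(p = q ∧ a = b)) : Disjoint (halfTree p a) (halfTree q b) := by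
  rw [Set.disjoint_left]
  intro x hx
  refine notMem_halfTree_of_reachableIn (reachableIn_halfTree hx)
    (fun hq' ↦ (hp.notMem_halfTree hS hq.1 hq').elim) fun hmem ↦ hne ?_
  exact eq_of_notMem_halfTree_of_mul_letter_mem (hq.notMem_halfTree hS hp.1) hmem

theorem mul_notMem_union_halfTree {W : Subgroup (FreeGroup κ)} (hS : IsConnectedSet S)
    (hWS : (W : Set (FreeGroup κ)) * S ⊆ S) (hp : IsExit S p a) (hq : IsExit S q b) (hab : a ≠ b)
    {w x : FreeGroup κ} (hw : w ∈ W) (hw1 : w ≠ 1) (hx : x ∈ halfTree p a ∪ halfTree q b) :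
    w * x ∉ halfTree p a ∪ halfTree q b := by
  have hne : ∀ z : FreeGroup κ, w * z ≠ z := fun z h ↦ hw1 (mul_eq_right.1 h)
  have hdisjoint {r s : FreeGroup κ} {c d : κ × Bool} (hr : IsExit S r c) (hs : IsExit S s d)
      (hxr : x ∈ halfTree r c) (h : ¬(w * r = s ∧ c = d)) : w * x ∉ halfTree s d :=
    Set.disjoint_left.1 ((hr.mul_left hWS hw).disjoint_halfTree hs hS h)
      ((mul_mem_halfTree_mul_iff w).2 hxr)
  rcases hx with hx | hx <;> rintro (h | h)
  · exact hdisjoint hp hp hx (fun h ↦ hne p h.1) h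
  · exact hdisjoint hp hq hx (fun h ↦ hab h.2) h
  · exact hdisjoint hq hp hx (fun h ↦ hab h.2.symm) h
  · exact hdisjoint hq hq hx (fun h ↦ hne q h.1) h

end HalfTree

section FreeSplitting

theorem pow_smul_mem_of_smul_mem {G Y : Type*} [Group G] [MulAction G Y] {A B : Set Y}
    (hAB : Disjoint A B) {c : G} (hc : ∀ x ∉ A, c • x ∈ B) {n : ℕ} (hn : n ≠ 0) {x : Y}
    (hx : x ∉ A) : c ^ n • x ∈ B := by
  obtain ⟨k, rfl⟩ := Nat.exists_eq_succ_of_ne_zero hn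
  clear hn
  induction k with
  | zero => simpa using hc x hx
  | succ k ih =>
    rw [pow_succ', mul_smul]
    exact hc _ (Set.disjoint_right.1 hAB ih)

theorem zpow_smul_mem_union {G Y : Type*} [Group G] [MulAction G Y] {A B : Set Y}
    (hAB : Disjoint A B) {c : G} (hc : ∀ x, c • x ∈ B ↔ x ∉ A) {n : ℤ} (hn : n ≠ 0) {x : Y}
    (hx : x ∉ A ∪ B) : c ^ n • x ∈ A ∪ B := by
  have hc' : ∀ x ∉ B, c⁻¹ • x ∈ A := fun x hx ↦ by
    by_contra h
    exact hx (by simpa using (hc _).2 h)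
  obtain ⟨k, rfl | rfl⟩ := n.eq_nat_or_neg
  · rw [zpow_natCast]
    exact .inr (pow_smul_mem_of_smul_mem hAB (fun x ↦ (hc x).2) (by simpa using hn)
      fun h ↦ hx (.inl h))
  · rw [zpow_neg, zpow_natCast, ← inv_pow]
    exact .inl (pow_smul_mem_of_smul_mem hAB.symm hc' (by simpa using hn) fun h ↦ hx (.inr h))

theorem exists_lift_eq_zpow_of_unique {G γ : Type*} [Group G] [Unique γ] (g : γ → G)
    {x : FreeGroup γ} (hx : x ≠ 1) : ∃ n : ℤ, n ≠ 0 ∧ FreeGroup.lift g x = g default ^ n := by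
  have htop : x ∈ Subgroup.closure (Set.range (FreeGroup.of : γ → FreeGroup γ)) := by
    rw [FreeGroup.closure_range_of]
    trivial
  rw [Set.range_unique, Subgroup.mem_closure_singleton] at htop
  obtain ⟨n, rfl⟩ := htop
  exact ⟨n, by rintro rfl; exact hx (zpow_zero _), by simp⟩

variable {κ : Type*}

-- Ping-pong: `W` moves the union `P` of the half-trees beyond the edge `(q, a)` and beyond the
-- reverse of its `c`-translate off itself, while nonzero powers of `c` map the complement of `P`
-- into `P`.
theorem rank_adjoin_singleton_of_not_meets {W : Subgroup (FreeGroup κ)} (hW : W.FG)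
    {S : Set (FreeGroup κ)} (hS : IsConnectedSet S) (hWS : (W : Set (FreeGroup κ)) * S ⊆ S)
    {q c : FreeGroup κ} {a : κ × Bool} (hq : q ∈ S) (hcqa : c * (q * letter a) ∈ S)
    (hc : ¬Meets S c) : rank (adjoin W [c]) = rank W + 1 := by
  classical
  set v := c * (q * letter a) with hv
  have hcq : v * letter (invLetter a) = c * q := by
    rw [letter_invLetter, hv, mul_assoc, mul_inv_cancel_right]
  have exit_q : IsExit S q a := ⟨hq, fun h ↦ hc ⟨_, h, hcqa⟩⟩
  have exit_v : IsExit S v (invLetter a) := ⟨hcqa, fun h ↦ hc ⟨q, hq, hcq ▸ h⟩⟩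
  have hne : a ≠ invLetter a := fun h ↦ by simpa using congrArg Prod.snd h
  have hdisjoint : Disjoint (halfTree q a) (halfTree v (invLetter a)) :=
    exit_q.disjoint_halfTree exit_v hS fun h ↦ hne h.2
  have hcrossing : ∀ x : FreeGroup κ, c • x ∈ halfTree v (invLetter a) ↔ x ∉ halfTree q a := by
    intro x
    rw [mem_halfTree_iff_notMem_halfTree_invLetter, hcq, invLetter, Bool.not_not, smul_eq_mul,
      mul_mem_halfTree_mul_iff]
  obtain ⟨b, hb, hbW⟩ := exists_basis_of_fg hW
  let : Unique (Fin [c].length) := inferInstanceAs (Unique (Fin 1))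
  refine (rank_adjoin_eq_iff_injective hb hbW [c]).2 <|
    injective_lift_sumElim_of_ping_pong b [c].get (halfTree q a ∪ halfTree v (invLetter a))
      ⟨q, ?_⟩ (fun x hx p hp ↦ ?_) (fun x hx p hp ↦ ?_)
  · rintro (h | h)
    exacts [self_notMem_halfTree q a h, exit_v.notMem_halfTree hS hq h]
  · have hxW : FreeGroup.lift b x ∈ W := hbW.le ⟨x, rfl⟩
    exact mul_notMem_union_halfTree hS hWS exit_q exit_v hne hxW ((map_ne_one_iff _ hb).2 hx) hp
  · obtain ⟨n, hn, hxn⟩ := exists_lift_eq_zpow_of_unique [c].get hx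
    rw [hxn]
    exact zpow_smul_mem_union hdisjoint hcrossing hn hp

end FreeSplitting

/-! ### Folding -/

section Replace

variable {G : Type*} [Group G] {X : Subgroup G}

theorem adjoin_append_eq_sup (X : Subgroup G) (l l' : List G) :
    adjoin X (l ++ l') = adjoin X l ⊔ adjoin X l' := by
  rw [adjoin_append]
  refine le_antisymm (adjoin_le_iff.2 ⟨le_sup_left, fun x hx ↦ ?_⟩)
    (sup_le (le_adjoin _ _) (adjoin_mono (le_adjoin _ _) _))
  exact le_sup_right (a := adjoin X l) (mem_adjoin_of_mem X hx)

theorem adjoin_singleton_mul_mul {x y : G} (hx : x ∈ X) (hy : y ∈ X) (c : G) :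
    adjoin X [x * c * y] = adjoin X [c] := by
  have hiff (K : Subgroup G) : adjoin X [x * c * y] ≤ K ↔ adjoin X [c] ≤ K := by
    simp only [adjoin_le_iff, List.forall_mem_singleton]
    refine and_congr_right fun hK ↦ ?_
    rw [K.mul_mem_cancel_right (hK hy), K.mul_mem_cancel_left (hK hx)]
  exact le_antisymm ((hiff _).2 le_rfl) ((hiff _).1 le_rfl)

theorem adjoin_singleton_mul {y : G} (hy : y ∈ X) (c : G) :
    adjoin X [c * y] = adjoin X [c] := by
  simpa using adjoin_singleton_mul_mul X.one_mem hy c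

theorem adjoin_singleton_inv (X : Subgroup G) (c : G) : adjoin X [c⁻¹] = adjoin X [c] := by
  simp only [adjoin, List.mem_singleton, Set.ofPred_eq_eq_singleton,
    Subgroup.closure_singleton_inv]

theorem exists_forall_adjoin_eq {P : G → Prop} {l : List G}
    (h : ∀ c ∈ l, ∃ c', P c' ∧ adjoin X [c'] = adjoin X [c]) :
    ∃ l', l'.length = l.length ∧ (∀ c ∈ l', P c) ∧ adjoin X l' = adjoin X l := by
  induction l with
  | nil => exact ⟨[], rfl, by simp, rfl⟩
  | cons c l ih =>
    obtain ⟨c', hc', hcc'⟩ := h c List.mem_cons_self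
    obtain ⟨l', hlen, hl', hll'⟩ := ih fun e he ↦ h e (List.mem_cons_of_mem c he)
    refine ⟨c' :: l', by simp [hlen], List.forall_mem_cons.2 ⟨hc', hl'⟩, ?_⟩
    rw [← List.singleton_append, ← List.singleton_append (l := l), adjoin_append_eq_sup,
      adjoin_append_eq_sup, hcc', hll']

variable {S : Set G} {q h : G}

theorem Meets.of_union (hXS : (X : Set G) * S ⊆ S) (hq : q ∈ S) {c : G}
    (hc : Meets (S ∪ (X : Set G) * {h}) c) :
    Meets S c ∨ ∃ c', c' * h ∈ S ∧ adjoin X [c'] = adjoin X [c] := by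
  simp only [Meets, Set.mul_singleton] at hc
  obtain ⟨u, hu | ⟨x, hx, rfl⟩, hcu | ⟨y, hy, hcu⟩⟩ := hc
  · exact .inl ⟨u, hu, hcu⟩
  · refine .inr ⟨c⁻¹ * y, ?_, by rw [adjoin_singleton_mul hy, adjoin_singleton_inv]⟩
    rwa [mul_assoc, show y * h = c * u from hcu, inv_mul_cancel_left]
  · exact .inr ⟨c * x, by rwa [mul_assoc], adjoin_singleton_mul hx c⟩
  · have hcX : c ∈ X := by
      rw [← X.mul_mem_cancel_right hx, ← mul_right_cancel (hcu.trans (mul_assoc c x h).symm)]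
      exact hy
    exact .inl ⟨q, hq, hXS (Set.mul_mem_mul hcX hq)⟩

theorem exists_cons_of_forall_meets_union (hXS : (X : Set G) * S ⊆ S) (hq : q ∈ S) {l : List G}
    (hl : ∀ c ∈ l, Meets (S ∪ (X : Set G) * {h}) c) :
    (∀ c ∈ l, Meets S c) ∨ ∃ c l', l'.length + 1 = l.length ∧ adjoin X (c :: l') = adjoin X l ∧
      (∀ e ∈ l', Meets S e) ∧ c * h ∈ S := by
  classical
  by_contra! hcon
  obtain ⟨⟨d, hd, hdS⟩, hcon⟩ := hcon
  obtain ⟨c, hcS, hcd⟩ := ((hl d hd).of_union hXS hq).resolve_left hdS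
  -- Once `c` is adjoined, every other `e` with `e * h ∈ S` can be replaced by `e * c⁻¹`.
  have hreplace : ∀ e ∈ l.erase d, ∃ e', Meets S e' ∧
      adjoin (adjoin X [c]) [e'] = adjoin (adjoin X [c]) [e] := by
    intro e he
    rcases (hl e (List.mem_of_mem_erase he)).of_union hXS hq with heS | ⟨e', heS, hee'⟩
    · exact ⟨e, heS, rfl⟩
    · refine ⟨e' * c⁻¹, ⟨c * h, hcS, by rwa [← mul_assoc, inv_mul_cancel_right]⟩, ?_⟩
      have hc : c⁻¹ ∈ adjoin X [c] := inv_mem (mem_adjoin_of_mem X List.mem_cons_self)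
      rw [adjoin_singleton_mul hc, ← adjoin_append, ← adjoin_append, adjoin_append_eq_sup, hee',
        ← adjoin_append_eq_sup]
  obtain ⟨l', hlen, hl', hll'⟩ := exists_forall_adjoin_eq hreplace
  refine hcon c l' ?_ ?_ hl' hcS
  · rw [hlen, List.length_erase_add_one hd]
  · rw [adjoin_cons, hll', hcd, ← adjoin_cons]
    exact adjoin_congr X fun x ↦ (List.perm_cons_erase hd).mem_iff.symm

end Replace

section Fold

variable {κ : Type*} {X : Subgroup (FreeGroup κ)} {S S₀ : Set (FreeGroup κ)}

theorem exists_fold (hX : X.FG) (hS : IsConnectedSet S) (hXS : (X : Set (FreeGroup κ)) * S ⊆ S)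
    {q : FreeGroup κ} (hq : q ∈ S) (a : κ × Bool) {l : List (FreeGroup κ)}
    (hl : ∀ c ∈ l, Meets (S ∪ (X : Set (FreeGroup κ)) * {q * letter a}) c) :
    (∃ l', l'.length = l.length ∧ adjoin X l' = adjoin X l ∧ ∀ c ∈ l', Meets S c) ∨
      ∃ c l', l'.length + 1 = l.length ∧ adjoin X (c :: l') = adjoin X l ∧
        (∀ e ∈ l', Meets S e) ∧ rank (adjoin X l) = rank (adjoin X l') + 1 := by
  rcases exists_cons_of_forall_meets_union hXS hq hl with hl | ⟨c, l', hlen, heq, hl', hc⟩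
  · exact .inl ⟨l, rfl, rfl, hl⟩
  set Y : Set (FreeGroup κ) := (adjoin X l' : Set (FreeGroup κ)) * S
  have hSY : S ⊆ Y := subset_subgroup_mul _ S
  by_cases hcY : Meets Y c
  · obtain ⟨_, ⟨w, hw, u, hu, rfl⟩, w', hw', u', hu', hwu⟩ := hcY
    refine .inl ⟨w'⁻¹ * c * w :: l', by simp [hlen], ?_, List.forall_mem_cons.2 ⟨⟨u, hu, ?_⟩, hl'⟩⟩
    · rw [adjoin_cons_eq_adjoin_singleton, adjoin_singleton_mul_mul (inv_mem hw') hw,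
        ← adjoin_cons_eq_adjoin_singleton, heq]
    · rwa [mul_assoc, mul_assoc, ← hwu, inv_mul_cancel_left]
  · refine .inr ⟨c, l', hlen, heq, hl', ?_⟩
    rw [← heq, adjoin_cons_eq_adjoin_singleton]
    exact rank_adjoin_singleton_of_not_meets (fg_adjoin hX l') (hS.adjoin_mul hXS hl')
      (Set.mul_subset_iff.2 fun w hw s hs ↦ mul_mem_subgroup_mul hw hs) (hSY hq) (hSY hc) hcY

/-- `OrbitExtension X S₀ S`: the set `S` of vertices arises from `S₀` by repeatedly adding the
`X`-orbit of a neighbour of a vertex that is already present. -/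
inductive OrbitExtension (X : Subgroup (FreeGroup κ)) (S₀ : Set (FreeGroup κ)) :
    Set (FreeGroup κ) → Prop
  | refl : OrbitExtension X S₀ S₀
  | extend (S : Set (FreeGroup κ)) (q : FreeGroup κ) (a : κ × Bool) (hS : OrbitExtension X S₀ S)
      (hq : q ∈ S) : OrbitExtension X S₀ (S ∪ (X : Set (FreeGroup κ)) * {q * letter a})

namespace OrbitExtension

theorem mul_subset (h : OrbitExtension X S₀ S) (hXS₀ : (X : Set (FreeGroup κ)) * S₀ ⊆ S₀) :
    (X : Set (FreeGroup κ)) * S ⊆ S := by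
  induction h with
  | refl => exact hXS₀
  | extend S q a _ _ ih =>
    rw [Set.mul_union, ← mul_assoc, coe_mul_coe]
    exact Set.union_subset_union_left _ ih

theorem isConnectedSet (h : OrbitExtension X S₀ S) (hXS₀ : (X : Set (FreeGroup κ)) * S₀ ⊆ S₀)
    (hS₀ : IsConnectedSet S₀) : IsConnectedSet S := by
  induction h with
  | refl => exact hS₀
  | extend S q a hS hq ih =>
    refine isConnectedSet_of_reachableIn q ?_
    rintro y (hy | ⟨x, hx, _, rfl, rfl⟩)
    · exact (ih q hq y hy).mono Set.subset_union_left
    · have hxq : x * q ∈ S := hS.mul_subset hXS₀ (Set.mul_mem_mul hx hq)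
      have hxqa : x * q * letter a ∈ S ∪ (X : Set (FreeGroup κ)) * {q * letter a} := by
        rw [mul_assoc]
        exact .inr (Set.mul_mem_mul hx rfl)
      change ReachableIn _ q (x * (q * letter a))
      rw [← mul_assoc]
      exact ((ih q hq _ hxq).mono Set.subset_union_left).trans (.step (.inl hxq) hxqa)

theorem finite (h : OrbitExtension ⊥ S₀ S) (hS₀ : S₀.Finite) : S.Finite := by
  induction h with
  | refl => exact hS₀
  | extend S q a _ _ ih =>
    rw [Subgroup.coe_bot, Set.singleton_mul_singleton]
    exact ih.union (Set.finite_singleton _)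

theorem exists_superset_mul_mem {p : FreeGroup κ} (h : OrbitExtension X S₀ S) (hp : p ∈ S)
    (g : FreeGroup κ) : ∃ T, OrbitExtension X S₀ T ∧ S ⊆ T ∧ p * g ∈ T := by
  classical
  rw [← FreeGroup.mk_toWord (x := g)]
  induction g.toWord generalizing S p with
  | nil => exact ⟨S, h, subset_rfl, by rwa [← FreeGroup.one_eq_mk, mul_one]⟩
  | cons a L ih =>
    have hpa : p * letter a ∈ S ∪ (X : Set (FreeGroup κ)) * {p * letter a} :=
      .inr (subset_subgroup_mul X _ rfl)
    obtain ⟨T, hT, hST, hmem⟩ := ih (.extend S p a h hp) hpa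
    refine ⟨T, hT, Set.subset_union_left.trans hST, ?_⟩
    rwa [← List.singleton_append, ← FreeGroup.mul_mk, ← mul_assoc]

theorem exists_forall_mul_mem {u : FreeGroup κ} (hu : u ∈ S₀) (l : List (FreeGroup κ)) :
    ∃ S, OrbitExtension X S₀ S ∧ u ∈ S ∧ ∀ c ∈ l, c * u ∈ S := by
  induction l with
  | nil => exact ⟨S₀, .refl, hu, by simp⟩
  | cons c l ih =>
    obtain ⟨S, hS, huS, hlS⟩ := ih
    obtain ⟨T, hT, hST, hmem⟩ := hS.exists_superset_mul_mem huS (u⁻¹ * (c * u))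
    rw [mul_inv_cancel_left] at hmem
    exact ⟨T, hT, hST huS, List.forall_mem_cons.2 ⟨hmem, fun e he ↦ hST (hlS e he)⟩⟩

theorem exists_meets_or_rank_adjoin_eq (h : OrbitExtension X S₀ S) (hX : X.FG)
    (hXS₀ : (X : Set (FreeGroup κ)) * S₀ ⊆ S₀) (hS₀ : IsConnectedSet S₀) {l : List (FreeGroup κ)}
    (hl : ∀ c ∈ l, Meets S c) :
    (∃ c l', l'.length + 1 = l.length ∧ adjoin X (c :: l') = adjoin X l ∧ Meets S₀ c) ∨
      rank (adjoin X l) = rank X + l.length := by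
  induction h generalizing l with
  | refl =>
    cases l with
    | nil => exact .inr (by rw [adjoin_nil]; rfl)
    | cons c l => exact .inl ⟨c, l, rfl, rfl, hl c List.mem_cons_self⟩
  | extend S q a hS hq ih =>
    rcases exists_fold hX (hS.isConnectedSet hXS₀ hS₀) (hS.mul_subset hXS₀) hq a hl with
      ⟨l', hlen, heq, hl'⟩ | ⟨c, l', hlen, heq, hl', hrank⟩
    · rw [← hlen, ← heq]
      exact ih hl'
    · rcases ih hl' with ⟨d, l'', hlen', heq', hd⟩ | hrank'
      · refine .inl ⟨d, c :: l'', by simp [← hlen, hlen'], ?_, hd⟩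
        rw [← heq, adjoin_cons_eq_adjoin_singleton X c l', ← heq',
          ← adjoin_cons_eq_adjoin_singleton X c]
        exact adjoin_congr X fun x ↦ (List.Perm.swap c d l'').mem_iff
      · exact .inr (by rw [hrank, hrank', ← hlen, add_assoc])

end OrbitExtension

theorem exists_meets_or_rank_adjoin_eq (hX : X.FG) (hXS : (X : Set (FreeGroup κ)) * S ⊆ S)
    (hS : IsConnectedSet S) (hne : S.Nonempty) (l : List (FreeGroup κ)) :
    (∃ c l', l'.length + 1 = l.length ∧ adjoin X (c :: l') = adjoin X l ∧ Meets S c) ∨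
      rank (adjoin X l) = rank X + l.length := by
  obtain ⟨u, hu⟩ := hne
  obtain ⟨T, hT, huT, hlT⟩ := OrbitExtension.exists_forall_mul_mem (X := X) hu l
  exact hT.exists_meets_or_rank_adjoin_eq hX hXS hS fun c hc ↦ ⟨u, huT, hlT c hc⟩

theorem exists_finite_isConnectedSet_mul (hX : X.FG) :
    ∃ U : Set (FreeGroup κ), U.Finite ∧ U.Nonempty ∧
      IsConnectedSet ((X : Set (FreeGroup κ)) * U) := by
  obtain ⟨A, rfl⟩ := hX
  obtain ⟨U, hU, h1U, hAU⟩ := OrbitExtension.exists_forall_mul_mem (X := ⊥)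
    (Set.mem_singleton (1 : FreeGroup κ)) A.toList
  have hbot : ((⊥ : Subgroup (FreeGroup κ)) : Set (FreeGroup κ)) * {1} ⊆ {1} := by simp
  have hsingleton : IsConnectedSet {(1 : FreeGroup κ)} := by
    rintro _ rfl _ rfl
    exact Relation.ReflTransGen.refl
  rw [← adjoin_bot_toList]
  exact ⟨U, hU.finite (Set.finite_singleton 1), ⟨1, h1U⟩,
    (hU.isConnectedSet hbot hsingleton).adjoin_mul (hU.mul_subset hbot)
      fun c hc ↦ ⟨1, h1U, hAU c hc⟩⟩

end Fold

/-! ### Shortest invariant pairs -/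

section InvariantPair

variable {G : Type*} [Group G] {φ : G →* G} {A X : Subgroup G} {l l' : List G}

/-- `(X, l)` is an invariant pair for `A` under the endomorphism `φ`: the subgroup `X` is finitely
generated, `φ` maps it into `⟨X, l⟩`, and `⟨X, l⟩` generates the same `φ`-invariant subgroup
as `A`. The HNN extension of `⟨X, l⟩` along `φ : X → ⟨X, l⟩` is the candidate for the group
generated by `A` and an element conjugation by which induces `φ`. -/
structure IsInvariantPair (φ : G →* G) (A X : Subgroup G) (l : List G) : Prop where
  fg : X.FG
  map_le : X.map φ ≤ adjoin X l
  le_iff : ∀ K : Subgroup G, K.map φ ≤ K → (A ≤ K ↔ adjoin X l ≤ K)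

theorem exists_isInvariantPair (φ : G →* G) (hA : A.FG) : ∃ X l, IsInvariantPair φ A X l := by
  obtain ⟨T, rfl⟩ := hA
  exact ⟨⊥, T.toList, Subgroup.FG.bot, by simp, fun K _ ↦ by rw [adjoin_bot_toList]⟩

namespace IsInvariantPair

theorem of_adjoin_eq (h : IsInvariantPair φ A X l) (heq : adjoin X l' = adjoin X l) :
    IsInvariantPair φ A X l' :=
  ⟨h.fg, heq ▸ h.map_le, heq ▸ h.le_iff⟩

theorem advance (h : IsInvariantPair φ A X (l ++ l')) :
    IsInvariantPair φ A (adjoin X l) (l.map φ ++ l') := by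
  have hadjoin : adjoin (adjoin X l) (l.map φ ++ l') = adjoin (adjoin X (l ++ l')) (l.map φ) := by
    rw [← adjoin_append, ← adjoin_append]
    exact adjoin_congr X fun x ↦ by simp only [List.mem_append]; tauto
  refine ⟨fg_adjoin h.fg l, ?_, fun K hK ↦ ?_⟩
  · rw [hadjoin, map_adjoin]
    exact adjoin_mono h.map_le _
  · rw [h.le_iff K hK, hadjoin, adjoin_le_iff (X := adjoin X (l ++ l'))]
    refine (and_iff_left_of_imp fun hle ↦ List.forall_mem_map.2 fun x hx ↦ hK ⟨x, hle ?_, rfl⟩).symm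
    exact mem_adjoin_of_mem X (List.mem_append_left l' hx)

end IsInvariantPair

theorem subgroup_mul_diff_singleton {X Y : Subgroup G} (hXY : X ≤ Y) {U : Set G} {d u : G}
    (hd : d ∈ Y) (hu : u ∈ U) (hne : u ≠ d * u) :
    (Y : Set G) * (U \ {d * u}) = Y * (X * U) := by
  apply Set.Subset.antisymm
  · exact Set.mul_subset_mul_left (Set.sdiff_subset.trans (subset_subgroup_mul X U))
  · rintro _ ⟨y, hy, _, ⟨x, hx, v, hv, rfl⟩, rfl⟩
    have hyx : y * x ∈ Y := Y.mul_mem hy (hXY hx)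
    by_cases hvu : v = d * u
    · exact ⟨y * x * d, Y.mul_mem hyx hd, u, ⟨hu, hne⟩, by simp [hvu, mul_assoc]⟩
    · exact ⟨y * x, hyx, v, ⟨hv, hvu⟩, mul_assoc y x v⟩

end InvariantPair

section Shortest

variable {κ : Type*} {φ : FreeGroup κ →* FreeGroup κ} {A X : Subgroup (FreeGroup κ)}
  {l : List (FreeGroup κ)}

theorem rank_adjoin_advance_lt {G : Type*} [Group G] [IsFreeGroup G] {φ : G →* G}
    (hφ : Injective φ) {X : Subgroup G} {d : G} {l : List G} (hX : X.FG)
    (hmap : X.map φ ≤ adjoin X (d :: l))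
    (hrank : rank (adjoin X (d :: l)) < rank X + (d :: l).length) :
    rank (adjoin (adjoin X [d]) (φ d :: l)) < rank (adjoin X [d]) + (φ d :: l).length := by
  have hW : adjoin (adjoin X [d]) l = adjoin X (d :: l) := (adjoin_cons X d l).symm
  have hWfg : (adjoin X (d :: l)).FG := fg_adjoin hX _
  have hmapd : (adjoin X [d]).map φ = adjoin (X.map φ) [φ d] := map_adjoin φ X [d]
  have hle_d := rank_adjoin_le hX [d]
  have hle_φd := rank_adjoin_le hWfg [φ d]
  have hle_l := rank_adjoin_le (fg_adjoin hX [d]) l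
  rw [adjoin_cons_eq_adjoin_singleton, hW]
  rw [hW] at hle_l
  simp only [List.length_cons, List.length_nil] at hrank hle_d hle_φd ⊢
  by_contra hge
  have hd : rank (adjoin X [d]) = rank X + 1 := by
    by_contra hd
    have hφd := rank_adjoin_singleton_of_le hmap (fg_map hX φ) hWfg (c := φ d) (by lia)
    rw [← hmapd, rank_map_of_injective (fg_adjoin hX [d]) φ hφ,
      rank_map_of_injective hX φ hφ] at hφd
    exact hd hφd
  lia

namespace IsInvariantPair

theorem exists_length_lt_or_exists_cons (h : IsInvariantPair φ A X l) {U : Set (FreeGroup κ)}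
    (hne : U.Nonempty) (hconn : IsConnectedSet ((X : Set (FreeGroup κ)) * U))
    (hrank : rank (adjoin X l) < rank X + l.length) :
    (∃ l', l'.length < l.length ∧ IsInvariantPair φ A X l') ∨
      ∃ d l', l'.length + 1 = l.length ∧ adjoin X (d :: l') = adjoin X l ∧
        ∃ u ∈ U, d * u ∈ U ∧ u ≠ d * u := by
  have hXU : (X : Set (FreeGroup κ)) * (X * U) ⊆ X * U :=
    Set.mul_subset_iff.2 fun w hw s hs ↦ mul_mem_subgroup_mul hw hs
  rcases exists_meets_or_rank_adjoin_eq h.fg hXU hconn (hne.mono (subset_subgroup_mul X U)) l with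
    ⟨c, l', hlen, hadjoin, _, ⟨x, hx, u, hu, rfl⟩, y, hy, v, hv, hcu⟩ | heq
  · by_cases hcX : c ∈ X
    · have hXc : adjoin X [c] = X :=
        le_antisymm (adjoin_le_iff.2 ⟨le_rfl, by simpa using hcX⟩) (le_adjoin X [c])
      rw [adjoin_cons, hXc] at hadjoin
      exact .inl ⟨l', by lia, h.of_adjoin_eq hadjoin⟩
    · have hdu : y⁻¹ * c * x * u = v := by
        rw [mul_assoc, mul_assoc, ← hcu]
        simp
      have hdX : y⁻¹ * c * x ∉ X := by
        rwa [X.mul_mem_cancel_right hx, X.mul_mem_cancel_left (X.inv_mem hy)]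
      refine .inr ⟨y⁻¹ * c * x, l', hlen, ?_, u, hu, hdu ▸ hv, fun huv ↦ hdX ?_⟩
      · rw [adjoin_cons, adjoin_singleton_mul_mul (X.inv_mem hy) hx, ← adjoin_cons, hadjoin]
      · rw [right_eq_mul.1 huv]
        exact X.one_mem
  · exact absurd heq hrank.ne

-- Moving `d` from the list into `X` merges the `X`-orbits of `u` and `d * u`, so that the number
-- of orbit representatives drops.
theorem exists_length_lt_of_rank_lt (hφ : Injective φ) (h : IsInvariantPair φ A X l)
    {U : Set (FreeGroup κ)} (hU : U.Finite) (hne : U.Nonempty)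
    (hconn : IsConnectedSet ((X : Set (FreeGroup κ)) * U))
    (hrank : rank (adjoin X l) < rank X + l.length) :
    ∃ X' l', l'.length < l.length ∧ IsInvariantPair φ A X' l' := by
  induction hn : U.ncard using Nat.strong_induction_on generalizing U X l with
  | _ n ih =>
  rcases h.exists_length_lt_or_exists_cons hne hconn hrank with
    ⟨l', hlt, h'⟩ | ⟨d, l', hlen, hadjoin, u, hu, hdu, hne⟩
  · exact ⟨X, l', hlt, h'⟩
  have hpair : IsInvariantPair φ A X (d :: l') := h.of_adjoin_eq hadjoin
  have hpair' : IsInvariantPair φ A (adjoin X [d]) (φ d :: l') := hpair.advance (l := [d])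
  have hd : d ∈ adjoin X [d] := mem_adjoin_of_mem X List.mem_cons_self
  have hconn' : IsConnectedSet ((adjoin X [d] : Set (FreeGroup κ)) * (U \ {d * u})) := by
    rw [subgroup_mul_diff_singleton (le_adjoin X [d]) hd hu hne]
    exact hconn.adjoin_mul (Set.mul_subset_iff.2 fun w hw s hs ↦ mul_mem_subgroup_mul hw hs)
      (List.forall_mem_singleton.2 ⟨u, subset_subgroup_mul X U hu, subset_subgroup_mul X U hdu⟩)
  have hrank' : rank (adjoin (adjoin X [d]) (φ d :: l')) <
      rank (adjoin X [d]) + (φ d :: l').length :=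
    rank_adjoin_advance_lt hφ h.fg hpair.map_le (by rwa [hadjoin, List.length_cons, hlen])
  obtain ⟨X', l'', hlt, hX'⟩ := ih _ (hn ▸ Set.ncard_sdiff_singleton_lt_of_mem hdu hU) hpair'
    hU.sdiff ⟨u, hu, hne⟩ hconn' hrank' rfl
  exact ⟨X', l'', hlen ▸ hlt, hX'⟩

theorem exists_length_lt (hφ : Injective φ) (h : IsInvariantPair φ A X l)
    (hrank : rank (adjoin X l) ≠ rank X + l.length) :
    ∃ X' l', l'.length < l.length ∧ IsInvariantPair φ A X' l' := by
  obtain ⟨U, hU, hne, hconn⟩ := exists_finite_isConnectedSet_mul h.fg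
  exact h.exists_length_lt_of_rank_lt hφ hU hne hconn ((rank_adjoin_le h.fg l).lt_of_ne hrank)

end IsInvariantPair

theorem exists_shortest_isInvariantPair (hφ : Injective φ) (hA : A.FG) :
    ∃ X l, IsInvariantPair φ A X l ∧ ∀ X' l', IsInvariantPair φ A X' l' → l'.length = l.length →
      rank (adjoin X' l') = rank X' + l'.length := by
  classical
  have hex : ∃ s, ∃ X l, l.length = s ∧ IsInvariantPair φ A X l := by
    obtain ⟨X, l, h⟩ := exists_isInvariantPair φ hA
    exact ⟨l.length, X, l, rfl, h⟩
  obtain ⟨X, l, hl, h⟩ := Nat.find_spec hex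
  refine ⟨X, l, h, fun X' l' h' hl' ↦ ?_⟩
  by_contra hrank
  obtain ⟨X'', l'', hlt, h''⟩ := h'.exists_length_lt hφ hrank
  exact Nat.find_min hex (by lia) ⟨X'', l'', rfl, h''⟩

end Shortest

/-! ### The free telescope of a shortest pair -/

section Telescope

/-- The ascending chain `X ≤ ⟨X, l⟩ ≤ ⟨X, l, φ l⟩ ≤ ⋯`. -/
def iterateChain {G : Type*} [Group G] (φ : G →* G) (X : Subgroup G) (l : List G) : ℕ → Subgroup G
  | 0 => X
  | n + 1 => adjoin (iterateChain φ X l n) (l.map φ^[n])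

theorem IsInvariantPair.iterateChain {G : Type*} [Group G] {φ : G →* G} {A X : Subgroup G}
    {l : List G} (h : IsInvariantPair φ A X l) (n : ℕ) :
    IsInvariantPair φ A (iterateChain φ X l n) (l.map φ^[n]) := by
  induction n with
  | zero => simpa [MappingTorus.iterateChain] using h
  | succ n ih =>
    have hadvance := (ih.of_adjoin_eq (by rw [List.append_nil]) :
      IsInvariantPair φ A _ (l.map φ^[n] ++ [])).advance
    rwa [List.append_nil, List.map_map, ← iterate_succ'] at hadvance

theorem range_lift_iterate {G : Type*} [Group G] (φ : G →* G) {X : Subgroup G} {α : Type*}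
    {b : α → G} (hb : (FreeGroup.lift b).range = X) (l : List G) (n : ℕ) :
    (FreeGroup.lift (Sum.elim b fun p : Fin n × Fin l.length ↦ φ^[p.1] (l.get p.2))).range =
      iterateChain φ X l n := by
  refine eq_of_forall_ge_iff fun K ↦ ?_
  rw [range_lift_sumElim, sup_le_iff, hb, FreeGroup.range_lift_eq_closure, Subgroup.closure_le,
    Set.range_subset_iff]
  induction n with
  | zero => simp [iterateChain]
  | succ n ih =>
    rw [iterateChain, adjoin_le_iff, ← ih, and_assoc, List.forall_mem_map, List.forall_mem_iff_get]
    refine and_congr_right fun _ ↦ ?_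
    simp only [Prod.forall, Fin.forall_fin_succ']
    rfl

theorem exists_map_finVal_eq {α β : Type*} (w : FreeGroup (α ⊕ ℕ × β)) :
    ∃ (n : ℕ) (v : FreeGroup (α ⊕ Fin n × β)),
      FreeGroup.map (Sum.map id (Prod.map Fin.val id)) v = w := by
  let inc (n : ℕ) : FreeGroup (α ⊕ Fin n × β) →* FreeGroup (α ⊕ ℕ × β) :=
    FreeGroup.map (Sum.map id (Prod.map Fin.val id))
  have hmono : Monotone fun n ↦ (inc n).range := fun n m hnm ↦ by
    have hfactor : inc n =
        (inc m).comp (FreeGroup.map (Sum.map id (Prod.map (Fin.castLE hnm) id))) := by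
      ext (x | ⟨k, x⟩) <;> simp [inc]
    change (inc n).range ≤ (inc m).range
    rw [hfactor, MonoidHom.range_comp]
    exact Subgroup.map_le_range _ _
  have hof (x : α ⊕ ℕ × β) : FreeGroup.of x ∈ ⨆ n, (inc n).range := by
    rcases x with x | ⟨k, y⟩
    · exact Subgroup.mem_iSup_of_mem 0 ⟨FreeGroup.of (Sum.inl x), by simp [inc]⟩
    · exact Subgroup.mem_iSup_of_mem (k + 1) ⟨FreeGroup.of (Sum.inr (Fin.last k, y)), by simp [inc]⟩
  have htop : (⊤ : Subgroup (FreeGroup (α ⊕ ℕ × β))) ≤ ⨆ n, (inc n).range := by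
    rw [← FreeGroup.closure_range_of, Subgroup.closure_le]
    exact Set.range_subset_iff.2 hof
  exact (Subgroup.mem_iSup_of_directed hmono.directed_le).1 (htop (Subgroup.mem_top w))

theorem injective_lift_iterate {κ : Type*} {φ : FreeGroup κ →* FreeGroup κ}
    {X : Subgroup (FreeGroup κ)} {l : List (FreeGroup κ)} {b : Fin (rank X) → FreeGroup κ}
    (hb : (FreeGroup.lift b).range = X)
    (hrank : ∀ n, rank (iterateChain φ X l n) = rank X + n * l.length) :
    Injective
      (FreeGroup.lift (Sum.elim b fun p : ℕ × Fin l.length ↦ φ^[p.1] (l.get p.2))) := by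
  refine (injective_iff_map_eq_one _).2 fun w hw ↦ ?_
  obtain ⟨n, v, rfl⟩ := exists_map_finVal_eq w
  have hfactor : (FreeGroup.lift (Sum.elim b fun p : ℕ × Fin l.length ↦ φ^[p.1] (l.get p.2))).comp
      (FreeGroup.map (Sum.map id (Prod.map Fin.val id))) =
        FreeGroup.lift (Sum.elim b fun p : Fin n × Fin l.length ↦ φ^[p.1] (l.get p.2)) := by
    ext (x | x) <;> simp
  have hinj := injective_of_rank_range_eq
    (FreeGroup.lift (Sum.elim b fun p : Fin n × Fin l.length ↦ φ^[p.1] (l.get p.2)))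
    (by rw [range_lift_iterate φ hb, hrank]; simp)
  rw [← MonoidHom.comp_apply, hfactor] at hw
  rw [(injective_iff_map_eq_one _).1 hinj v hw, map_one]

theorem rank_iterateChain {G : Type*} [Group G] [IsFreeGroup G] {φ : G →* G} {A X : Subgroup G}
    {l : List G} (h : IsInvariantPair φ A X l)
    (hrank : ∀ X' l', IsInvariantPair φ A X' l' → l'.length = l.length →
      rank (adjoin X' l') = rank X' + l'.length) (n : ℕ) :
    rank (iterateChain φ X l n) = rank X + n * l.length := by
  induction n with
  | zero => simp [iterateChain]
  | succ n ih =>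
    rw [iterateChain, hrank _ _ (h.iterateChain n) (List.length_map _), ih, List.length_map]
    ring

theorem exists_injective_lift_iterate {κ : Type*} {φ : FreeGroup κ →* FreeGroup κ}
    (hφ : Injective φ) {A : Subgroup (FreeGroup κ)} (hA : A.FG) :
    ∃ (m s : ℕ) (b : Fin m → FreeGroup κ) (d : Fin s → FreeGroup κ),
      Injective (FreeGroup.lift (Sum.elim b fun p : ℕ × Fin s ↦ φ^[p.1] (d p.2))) ∧
      (∀ j, φ (b j) ∈ (FreeGroup.lift (Sum.elim b d)).range) ∧
      ∀ K : Subgroup (FreeGroup κ), K.map φ ≤ K →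
        (A ≤ K ↔ (FreeGroup.lift (Sum.elim b d)).range ≤ K) := by
  obtain ⟨X, l, h, hrank⟩ := exists_shortest_isInvariantPair hφ hA
  obtain ⟨b, -, hb⟩ := exists_basis_of_fg h.fg
  refine ⟨rank X, l.length, b, l.get, injective_lift_iterate hb (rank_iterateChain h hrank),
    fun j ↦ ?_, fun K hK ↦ ?_⟩
  · rw [range_lift_sumElim_get hb]
    exact h.map_le ⟨b j, hb ▸ ⟨FreeGroup.of j, FreeGroup.lift_apply_of⟩, rfl⟩
  · rw [h.le_iff K hK, range_lift_sumElim_get hb]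

end Telescope

/-! ### Ascending normal forms -/

section NormalForm

variable {G : Type*} [Group G] {σ : G} {N : Subgroup G}

theorem pow_mul_mul_inv_mem (hσ : ∀ n ∈ N, σ * n * σ⁻¹ ∈ N) (k : ℕ) {n : G} (hn : n ∈ N) :
    σ ^ k * n * (σ ^ k)⁻¹ ∈ N := by
  induction k with
  | zero => simpa using hn
  | succ k ih =>
    have hconj := hσ _ ih
    rwa [← mul_assoc, ← mul_assoc, mul_assoc _ (σ ^ k)⁻¹, ← mul_inv_rev, ← pow_succ'] at hconj

theorem mul_pow_mul_mul_inv_mem (hσ : ∀ n ∈ N, σ * n * σ⁻¹ ∈ N) {x : G} (hx : x ∈ N) (k : ℕ)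
    {n : G} (hn : n ∈ N) : x * σ ^ k * n * (x * σ ^ k)⁻¹ ∈ N := by
  have hconj := N.mul_mem (N.mul_mem hx (pow_mul_mul_inv_mem hσ k hn)) (N.inv_mem hx)
  simpa only [mul_inv_rev, mul_assoc] using hconj

theorem exists_eq_inv_pow_mul_mul_pow (hσ : ∀ n ∈ N, σ * n * σ⁻¹ ∈ N) {p : G}
    (hp : p ∈ adjoin N [σ]) : ∃ a b : ℕ, ∃ n ∈ N, p = (σ ^ a)⁻¹ * n * σ ^ b := by
  let K : Subgroup G :=
    { carrier := {p | ∃ a b : ℕ, ∃ n ∈ N, p = (σ ^ a)⁻¹ * n * σ ^ b}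
      one_mem' := ⟨0, 0, 1, N.one_mem, by simp⟩
      mul_mem' := by
        rintro _ _ ⟨a, b, n, hn, rfl⟩ ⟨c, d, m, hm, rfl⟩
        refine ⟨c + a, b + d, (σ ^ c * n * (σ ^ c)⁻¹) * (σ ^ b * m * (σ ^ b)⁻¹),
          N.mul_mem (pow_mul_mul_inv_mem hσ c hn) (pow_mul_mul_inv_mem hσ b hm), ?_⟩
        have hcomm : (σ ^ c)⁻¹ * σ ^ b = σ ^ b * (σ ^ c)⁻¹ :=
          (Commute.pow_pow_self σ c b).inv_left.eq
        simp only [pow_add, mul_inv_rev, mul_assoc, inv_mul_cancel_left]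
        rw [← mul_assoc (σ ^ c)⁻¹ (σ ^ b), hcomm, mul_assoc]
      inv_mem' := by
        rintro _ ⟨a, b, n, hn, rfl⟩
        exact ⟨b, a, n⁻¹, N.inv_mem hn, by group⟩ }
  have hle : adjoin N [σ] ≤ K := adjoin_le_iff.2 ⟨fun n hn ↦ ⟨0, 0, n, hn, by simp⟩,
    List.forall_mem_singleton.2 ⟨0, 1, 1, N.one_mem, by simp⟩⟩
  exact hle hp

theorem pow_mul_map_mul_inv {F : Type*} [Group F] {i : F →* G} {φ : F →* F}
    (hφ : ∀ g, σ * i g * σ⁻¹ = i (φ g)) (k : ℕ) (g : F) :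
    σ ^ k * i g * (σ ^ k)⁻¹ = i (φ^[k] g) := by
  induction k with
  | zero => simp
  | succ k ih =>
    rw [iterate_succ_apply', ← hφ, ← ih, pow_succ']
    group

end NormalForm

/-! ### Mapping tori of injections of free factors -/

section Torus

variable {α β : Type u}

/-- The relators `σ xₐ σ⁻¹ (w a)⁻¹`, where `none` is `σ`, `some (inl a)` is `xₐ` and `some (inr b)`
is a further basis element. Both `prefRels` and, after splitting `I` into `J` and its complement,
`mtRelsRel` are of this form. -/
def torusRels (w : α → FreeGroup (α ⊕ β)) : Set (FreeGroup (Option (α ⊕ β))) :=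
  Set.range fun a ↦ FreeGroup.of none * FreeGroup.of (some (Sum.inl a)) * (FreeGroup.of none)⁻¹ *
    (FreeGroup.map some (w a))⁻¹

/-- The mapping torus of the homomorphism `xₐ ↦ w a` defined on a free factor. -/
abbrev Torus (w : α → FreeGroup (α ⊕ β)) : Type u :=
  PresentedGroup (torusRels w)

namespace Torus

variable (w : α → FreeGroup (α ⊕ β))

/-- The stable letter of a mapping torus. -/
def stable : Torus w :=
  PresentedGroup.of none

/-- The map from the base group to its mapping torus. -/
def base : FreeGroup (α ⊕ β) →* Torus w :=
  (PresentedGroup.mk _).comp (FreeGroup.map some)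

theorem stable_mul_base_mul_inv (a : α) :
    stable w * base w (FreeGroup.of (Sum.inl a)) * (stable w)⁻¹ = base w (w a) := by
  have hrel := PresentedGroup.one_of_mem (rels := torusRels w) ⟨a, rfl⟩
  rw [map_mul, map_inv, mul_inv_eq_one] at hrel
  exact hrel

theorem adjoin_base_range_stable : adjoin (base w).range [stable w] = ⊤ := by
  rw [eq_top_iff, ← PresentedGroup.closure_range_of, Subgroup.closure_le]
  rintro _ ⟨_ | x, rfl⟩
  · exact mem_adjoin_of_mem _ List.mem_cons_self
  · exact le_adjoin _ _ ⟨FreeGroup.of x, congrArg (PresentedGroup.mk _) FreeGroup.map.of⟩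

section Lift

variable {M : Type*} [Group M] {w} {f : FreeGroup (α ⊕ β) →* M} {t : M}

/-- The homomorphism from a mapping torus given by the images of the base group and of the stable
letter. -/
def lift (f : FreeGroup (α ⊕ β) →* M) (t : M)
    (h : ∀ a, t * f (FreeGroup.of (Sum.inl a)) * t⁻¹ = f (w a)) : Torus w →* M :=
  PresentedGroup.toGroup (f := fun o ↦ o.elim t fun x ↦ f (FreeGroup.of x)) <| by
    rintro _ ⟨a, rfl⟩
    have hmap : (FreeGroup.lift fun o : Option (α ⊕ β) ↦ o.elim t fun x ↦ f (FreeGroup.of x)).comp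
        (FreeGroup.map some) = f := by
      ext x
      simp
    rw [map_mul, map_inv, ← MonoidHom.comp_apply, hmap, ← h]
    simp

variable (h : ∀ a, t * f (FreeGroup.of (Sum.inl a)) * t⁻¹ = f (w a))

theorem lift_stable : lift f t h (stable w) = t :=
  PresentedGroup.toGroup.of _

theorem lift_comp_base : (lift f t h).comp (base w) = f := by
  ext x
  exact (PresentedGroup.toGroup.of (x := some x) _ : lift f t h (PresentedGroup.of (some x)) = _)

theorem lift_base (g : FreeGroup (α ⊕ β)) : lift f t h (base w g) = f g :=
  DFunLike.congr_fun (lift_comp_base h) g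

theorem range_lift : (lift f t h).range = adjoin f.range [t] := by
  rw [MonoidHom.range_eq_map, ← adjoin_base_range_stable, map_adjoin, ← MonoidHom.range_comp,
    lift_comp_base, List.map_singleton, lift_stable]

end Lift

/-- The exponent sum of the stable letter. -/
def height : Torus w →* Multiplicative ℤ :=
  lift 1 (Multiplicative.ofAdd 1) fun _ ↦ by simp

/-- The free group on the letters `xₐ` and the conjugates `σᵏ y_b σ⁻ᵏ` for `k : ℕ`, mapped to the
mapping torus. Its image is generated by the conjugates `σᵏ g σ⁻ᵏ` of elements `g` of the base
group. -/
def telescope : FreeGroup (α ⊕ ℕ × β) →* Torus w :=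
  FreeGroup.lift <| Sum.elim (fun a ↦ base w (FreeGroup.of (Sum.inl a)))
    fun p ↦ stable w ^ p.1 * base w (FreeGroup.of (Sum.inr p.2)) * (stable w ^ p.1)⁻¹

/-- The base group as a free factor of the telescope. -/
def baseInTelescope : FreeGroup (α ⊕ β) →* FreeGroup (α ⊕ ℕ × β) :=
  FreeGroup.map (Sum.map id (Prod.mk 0))

/-- The endomorphism of the telescope induced by conjugation by the stable letter. -/
def shift : FreeGroup (α ⊕ ℕ × β) →* FreeGroup (α ⊕ ℕ × β) :=
  FreeGroup.lift <| Sum.elim (fun a ↦ baseInTelescope (w a))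
    fun p ↦ FreeGroup.of (Sum.inr (p.1 + 1, p.2))

theorem shift_of_inl (a : α) : shift w (FreeGroup.of (Sum.inl a)) = baseInTelescope (w a) :=
  FreeGroup.lift_apply_of

theorem shift_of_inr (k : ℕ) (b : β) :
    shift w (FreeGroup.of (Sum.inr (k, b))) = FreeGroup.of (Sum.inr (k + 1, b)) :=
  FreeGroup.lift_apply_of

theorem height_base (g : FreeGroup (α ⊕ β)) : height w (base w g) = 1 :=
  lift_base _ g

theorem height_stable : height w (stable w) = Multiplicative.ofAdd 1 :=
  lift_stable _

theorem height_telescope (v : FreeGroup (α ⊕ ℕ × β)) : height w (telescope w v) = 1 := by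
  have hcomp : (height w).comp (telescope w) = 1 := by
    ext1 (a | p) <;> simp [telescope, height_base]
  exact DFunLike.congr_fun hcomp v

theorem telescope_comp_baseInTelescope : (telescope w).comp baseInTelescope = base w := by
  ext (a | b) <;> simp [telescope, baseInTelescope]

theorem stable_mul_telescope_mul_inv (v : FreeGroup (α ⊕ ℕ × β)) :
    stable w * telescope w v * (stable w)⁻¹ = telescope w (shift w v) := by
  have hcomp : (MulAut.conj (stable w)).toMonoidHom.comp (telescope w) =
      (telescope w).comp (shift w) := by
    ext (a | ⟨k, b⟩)
    · have hw := DFunLike.congr_fun (telescope_comp_baseInTelescope w) (w a)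
      rw [MonoidHom.comp_apply] at hw
      simp [telescope, shift, stable_mul_base_mul_inv, ← hw]
    · simp [telescope, shift, pow_succ', mul_assoc]
  exact DFunLike.congr_fun hcomp v

theorem stable_mul_mem_telescope_range :
    ∀ n ∈ (telescope w).range, stable w * n * (stable w)⁻¹ ∈ (telescope w).range := by
  rintro _ ⟨v, rfl⟩
  exact ⟨shift w v, (stable_mul_telescope_mul_inv w v).symm⟩

theorem exists_eq_inv_pow_mul_telescope_mul_pow (p : Torus w) :
    ∃ (a b : ℕ) (v : FreeGroup (α ⊕ ℕ × β)),
      p = (stable w ^ a)⁻¹ * telescope w v * stable w ^ b := by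
  have hbase : (base w).range ≤ (telescope w).range := by
    rw [← telescope_comp_baseInTelescope, MonoidHom.range_comp]
    exact Subgroup.map_le_range _ _
  have hp : p ∈ adjoin (telescope w).range [stable w] :=
    adjoin_mono hbase _ (adjoin_base_range_stable w ▸ Subgroup.mem_top p)
  obtain ⟨a, b, _, ⟨v, rfl⟩, hp⟩ :=
    exists_eq_inv_pow_mul_mul_pow (stable_mul_mem_telescope_range w) hp
  exact ⟨a, b, v, hp⟩

variable {w}

theorem exists_eq_inv_pow_mul_telescope_mul_pow_of_height_eq_one {p : Torus w}
    (hp : height w p = 1) : ∃ (a : ℕ) (v : FreeGroup (α ⊕ ℕ × β)),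
      p = (stable w ^ a)⁻¹ * telescope w v * stable w ^ a := by
  obtain ⟨a, b, v, rfl⟩ := exists_eq_inv_pow_mul_telescope_mul_pow w p
  have hab : a = b := by
    rw [map_mul, map_mul, map_inv, map_pow, map_pow, height_telescope, height_stable, mul_one,
      inv_mul_eq_one] at hp
    simpa using congrArg Multiplicative.toAdd hp
  exact ⟨a, v, hab ▸ rfl⟩

theorem injective_of_injective_comp_telescope {M : Type*} [Group M] {θ : Torus w →* M}
    (htelescope : Injective (θ.comp (telescope w))) (hheight : θ.ker ≤ (height w).ker) :
    Injective θ := by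
  refine (injective_iff_map_eq_one θ).2 fun p hp ↦ ?_
  obtain ⟨a, v, rfl⟩ :=
    exists_eq_inv_pow_mul_telescope_mul_pow_of_height_eq_one (MonoidHom.mem_ker.1 (hheight hp))
  have hv : θ (telescope w v) = 1 := by
    simpa [mul_assoc, inv_mul_eq_one] using hp
  rw [(injective_iff_map_eq_one _).1 htelescope v hv]
  simp

theorem shift_injective (hw : Injective (FreeGroup.lift w)) : Injective (shift w) := by
  let advance : (α ⊕ β) ⊕ ℕ × β → α ⊕ ℕ × β :=
    Sum.elim (Sum.map id (Prod.mk 0)) fun p ↦ Sum.inr (p.1 + 1, p.2)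
  have hadvance : Injective advance := by
    rintro ((a | b) | p) ((a' | b') | p') <;> simp [advance, Prod.ext_iff]
  have hshift : shift w = (FreeGroup.map advance).comp (FreeGroup.lift
      (Sum.elim (fun a ↦ FreeGroup.map Sum.inl (w a)) fun p ↦ FreeGroup.of (Sum.inr p))) := by
    ext (a | p)
    · rw [shift_of_inl, MonoidHom.comp_apply, FreeGroup.lift_apply_of]
      exact (FreeGroup.map.comp Sum.inl advance (w a)).symm
    · simp [shift, advance]
  rw [hshift]
  exact (FreeGroup.map_injective hadvance).comp (injective_lift_sumElim_map_inl_of_inr hw)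

-- The ascending HNN extension of `shift w` receives a map from `Torus w` that restricts to the
-- canonical embedding on the telescope.
theorem telescope_injective (hw : Injective (FreeGroup.lift w)) : Injective (telescope w) := by
  let E : (⊤ : Subgroup (FreeGroup (α ⊕ ℕ × β))) ≃* (shift w).range :=
    Subgroup.topEquiv.trans (MonoidHom.ofInjective (shift_injective hw))
  let Q := HNNExtension (FreeGroup (α ⊕ ℕ × β)) ⊤ (shift w).range E
  let ofQ : FreeGroup (α ⊕ ℕ × β) →* Q := HNNExtension.of
  have hconj (g) : (HNNExtension.t : Q) * ofQ g * (HNNExtension.t : Q)⁻¹ = ofQ (shift w g) :=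
    (HNNExtension.equiv_eq_conj (φ := E) ⟨g, Subgroup.mem_top g⟩).symm
  let θ : Torus w →* Q := lift (ofQ.comp baseInTelescope) HNNExtension.t fun a ↦
    (hconj (FreeGroup.of (Sum.inl a))).trans (congrArg ofQ (shift_of_inl w a))
  have hshift (k : ℕ) (b : β) : (shift w)^[k] (FreeGroup.of (Sum.inr (0, b))) =
      FreeGroup.of (Sum.inr (k, b)) := by
    induction k with
    | zero => rfl
    | succ k ih => rw [iterate_succ_apply', ih, shift_of_inr]
  have hθ : θ.comp (telescope w) = ofQ := by
    ext (a | ⟨k, b⟩)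
    · simp [θ, telescope, lift_base, baseInTelescope]
    · simp [θ, telescope, lift_base, lift_stable, baseInTelescope,
        pow_mul_map_mul_inv hconj, hshift]
  have hinj : Injective (θ.comp (telescope w)) := hθ ▸ HNNExtension.of_injective _
  exact Injective.of_comp hinj

theorem hom_ext {M : Type*} [Group M] {θ θ' : Torus w →* M}
    (hbase : ∀ g, θ (base w g) = θ' (base w g)) (hstable : θ (stable w) = θ' (stable w)) :
    θ = θ' := by
  have hle : adjoin (base w).range [stable w] ≤ θ.eqLocus θ' :=
    adjoin_le_iff.2 ⟨by rintro _ ⟨g, rfl⟩; exact hbase g, List.forall_mem_singleton.2 hstable⟩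
  rw [adjoin_base_range_stable] at hle
  exact MonoidHom.ext fun p ↦ hle (Subgroup.mem_top p)

theorem ker_le_ker_height {M : Type*} [Group M] {θ : Torus w →* M} (ε : M →* Multiplicative ℤ)
    (hbase : ∀ g, ε (θ (base w g)) = 1) (hstable : ε (θ (stable w)) ≠ 1) :
    θ.ker ≤ (height w).ker := by
  intro p hp
  have hcomp : ε.comp θ = (zpowersHom _ (ε (θ (stable w)))).comp (height w) :=
    hom_ext (fun g ↦ by simp [hbase, height_base]) (by simp [height_stable])
  have hzpow : ε (θ (stable w)) ^ (height w p).toAdd = 1 := by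
    simpa [MonoidHom.mem_ker.1 hp] using (DFunLike.congr_fun hcomp p).symm
  have hmul : (height w p).toAdd * (ε (θ (stable w))).toAdd = 0 :=
    congrArg Multiplicative.toAdd hzpow
  exact (mul_eq_zero.1 hmul).resolve_right hstable

theorem lift_injective {F M : Type*} [Group F] [Group M] {i : F →* M} (hi : Injective i) {τ : M}
    {φ : F →* F} (hφ : ∀ g, τ * i g * τ⁻¹ = i (φ g)) {ε : M →* Multiplicative ℤ}
    (hεi : ∀ g, ε (i g) = 1) (hετ : ε τ ≠ 1) {b : α → F} {d : β → F}
    (hbd : Injective (FreeGroup.lift (Sum.elim b fun p : ℕ × β ↦ φ^[p.1] (d p.2))))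
    (h : ∀ a, τ * i.comp (FreeGroup.lift (Sum.elim b d)) (FreeGroup.of (Sum.inl a)) * τ⁻¹ =
      i.comp (FreeGroup.lift (Sum.elim b d)) (w a)) :
    Injective (lift (i.comp (FreeGroup.lift (Sum.elim b d))) τ h) := by
  refine injective_of_injective_comp_telescope ?_
    (ker_le_ker_height ε (fun g ↦ by rw [lift_base]; exact hεi _) (by rwa [lift_stable]))
  have hcomp : (lift (i.comp (FreeGroup.lift (Sum.elim b d))) τ h).comp (telescope w) =
      i.comp (FreeGroup.lift (Sum.elim b fun p : ℕ × β ↦ φ^[p.1] (d p.2))) := by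
    ext (a | ⟨k, c⟩)
    · simp [telescope, lift_base]
    · simp [telescope, lift_base, lift_stable, pow_mul_map_mul_inv hφ]
  rw [hcomp]
  exact hi.comp hbd

open Filter in
theorem exists_map_conj_le_telescope_range {K : Subgroup (Torus w)} (hK : K.FG)
    (hheight : K ≤ (height w).ker) :
    ∃ a : ℕ, K.map (MulAut.conj (stable w ^ a)).toMonoidHom ≤ (telescope w).range := by
  obtain ⟨S, rfl⟩ := hK
  have heventually : ∀ p ∈ S,
      ∀ᶠ a : ℕ in atTop, MulAut.conj (stable w ^ a) p ∈ (telescope w).range := by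
    intro p hp
    obtain ⟨c, v, rfl⟩ := exists_eq_inv_pow_mul_telescope_mul_pow_of_height_eq_one
      (hheight (Subgroup.subset_closure hp))
    filter_upwards [eventually_ge_atTop c] with a hca
    obtain ⟨k, rfl⟩ := Nat.exists_eq_add_of_le' hca
    have hk := pow_mul_mul_inv_mem (stable_mul_mem_telescope_range w) k ⟨v, rfl⟩
    convert hk using 1
    rw [MulAut.conj_apply, pow_add]
    group
  obtain ⟨a, ha⟩ := ((eventually_all_finset S).2 heventually).exists
  refine ⟨a, ?_⟩
  rw [Subgroup.map_le_iff_le_comap, Subgroup.closure_le]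
  exact ha

theorem exists_conj_eq_telescope_mul_pow {K : Subgroup (Torus w)} (hK : K.FG)
    (hheight : K ≤ (height w).ker) {z : Torus w} {q : ℕ}
    (hz : height w z = Multiplicative.ofAdd (q : ℤ)) :
    ∃ a : ℕ, K.map (MulAut.conj (stable w ^ a)).toMonoidHom ≤ (telescope w).range ∧
      ∃ v, MulAut.conj (stable w ^ a) z = telescope w v * stable w ^ q := by
  have hzker : z * (stable w ^ q)⁻¹ ∈ (height w).ker := by
    rw [MonoidHom.mem_ker, map_mul, map_inv, map_pow, height_stable, hz, mul_inv_eq_one,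
      ← ofAdd_nsmul, nsmul_one]
  obtain ⟨a, ha⟩ := exists_map_conj_le_telescope_range (fg_adjoin hK [z * (stable w ^ q)⁻¹])
    (adjoin_le_iff.2 ⟨hheight, List.forall_mem_singleton.2 hzker⟩)
  rw [map_adjoin, adjoin_le_iff] at ha
  obtain ⟨v, hv⟩ := ha.2 _ List.mem_cons_self
  refine ⟨a, ha.1, v, ?_⟩
  have hconj : MulAut.conj (stable w ^ a) (stable w ^ q) = stable w ^ q := by
    rw [MulAut.conj_apply, (Commute.pow_pow_self (stable w) a q).eq, mul_inv_cancel_right]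
  rw [hv, MulEquiv.coe_toMonoidHom, map_mul, map_inv, hconj, inv_mul_cancel_right]

end Torus

end Torus

/-! ### Preferred presentations -/

/-- A group has a preferred presentation if it is the mapping torus of an injective homomorphism
to a free group of finite rank from one of its free factors. -/
def HasPreferredPresentation (H : Type*) [Group H] : Prop :=
  ∃ (m r : ℕ) (w : Fin m → FreeGroup (Fin m ⊕ Fin r)),
    Injective (FreeGroup.lift fun j ↦ w j) ∧ Nonempty (PresentedGroup (prefRels m r w) ≃* H)

section Subgroups

variable {F M : Type*} [Group F] [Group M]

theorem hasPreferredPresentation_of_mulEquiv (e : F ≃* M) (h : HasPreferredPresentation F) :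
    HasPreferredPresentation M := by
  obtain ⟨m, r, w, hw, ⟨E⟩⟩ := h
  exact ⟨m, r, w, hw, ⟨E.trans e⟩⟩

theorem hasPreferredPresentation_map_iff {i : F →* M} (hi : Injective i) {H : Subgroup F} :
    HasPreferredPresentation (H.map i) ↔ HasPreferredPresentation H :=
  ⟨hasPreferredPresentation_of_mulEquiv (H.equivMapOfInjective i hi).symm,
    hasPreferredPresentation_of_mulEquiv (H.equivMapOfInjective i hi)⟩

theorem exists_fg_map_eq {i : F →* M} {K : Subgroup M} (hK : K.FG) (hle : K ≤ i.range) :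
    ∃ A : Subgroup F, A.FG ∧ A.map i = K := by
  obtain ⟨n, b, rfl⟩ := exists_lift_range_eq_of_fg hK
  choose c hc using fun j ↦ hle ⟨FreeGroup.of j, FreeGroup.lift_apply_of⟩
  refine ⟨(FreeGroup.lift c).range, fg_range_of_finite _, ?_⟩
  have hcomp : i.comp (FreeGroup.lift c) = FreeGroup.lift b := by
    ext j
    simp [hc]
  rw [← MonoidHom.range_comp, hcomp]

theorem exists_conj_eq_map {i : F →* M} (hi : Injective i) {τ : M}
    (hτ : ∀ n ∈ i.range, τ * n * τ⁻¹ ∈ i.range) :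
    ∃ φ : F →* F, Injective φ ∧ ∀ g, τ * i g * τ⁻¹ = i (φ g) := by
  let conjRange : F →* i.range := ((MulAut.conj τ).toMonoidHom.comp i).codRestrict i.range
    fun g ↦ hτ _ ⟨g, rfl⟩
  have conjRange_injective : Injective conjRange := fun g g' h ↦
    hi ((MulAut.conj τ).injective (congrArg Subtype.val h))
  refine ⟨(MonoidHom.ofInjective hi).symm.toMonoidHom.comp conjRange,
    (MonoidHom.ofInjective hi).symm.injective.comp conjRange_injective, fun g ↦ ?_⟩
  exact (MonoidHom.apply_ofInjective_symm hi (conjRange g)).symm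

theorem exists_mem_map_eq_ofAdd_natCast {ε : M →* Multiplicative ℤ} {H : Subgroup M}
    (hH : ¬ H ≤ ε.ker) : ∃ z ∈ H, ∃ q : ℕ, q ≠ 0 ∧ ε z = Multiplicative.ofAdd (q : ℤ) ∧
      ∀ h ∈ H, ∃ n : ℤ, ε h = ε z ^ n := by
  obtain ⟨⟨_, y, hy, rfl⟩, hgen⟩ := IsCyclic.exists_generator (α := H.map ε)
  replace hgen : ∀ h ∈ H, ∃ n : ℤ, ε h = ε y ^ n := fun h hh ↦ by
    obtain ⟨n, hn⟩ := hgen ⟨ε h, h, hh, rfl⟩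
    exact ⟨n, (congrArg Subtype.val hn).symm⟩
  have hy1 : (ε y).toAdd.natAbs ≠ 0 := by
    rw [Int.natAbs_ne_zero]
    refine fun hy0 ↦ hH fun h hh ↦ ?_
    obtain ⟨n, hn⟩ := hgen h hh
    rw [MonoidHom.mem_ker, hn, toAdd_eq_zero.1 hy0, one_zpow]
  rcases Int.natAbs_eq (ε y).toAdd with hpos | hneg
  · exact ⟨y, hy, _, hy1, congrArg Multiplicative.ofAdd hpos, hgen⟩
  · refine ⟨y⁻¹, H.inv_mem hy, _, hy1, ?_, fun h hh ↦ ?_⟩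
    · rw [map_inv, inv_eq_iff_eq_inv]
      exact congrArg Multiplicative.ofAdd hneg
    · obtain ⟨n, hn⟩ := hgen h hh
      exact ⟨-n, by rw [hn, map_inv, inv_zpow, zpow_neg, inv_inv]⟩

theorem exists_eq_adjoin_of_not_le_ker {ε : M →* Multiplicative ℤ} {H : Subgroup M} (hH : H.FG)
    (hε : ¬ H ≤ ε.ker) : ∃ (K : Subgroup M) (z : M) (q : ℕ), K.FG ∧ K ≤ ε.ker ∧ q ≠ 0 ∧
      ε z = Multiplicative.ofAdd (q : ℤ) ∧ H = adjoin K [z] := by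
  obtain ⟨z, hz, q, hq, hzq, hgen⟩ := exists_mem_map_eq_ofAdd_natCast hε
  obtain ⟨S, rfl⟩ := hH
  obtain ⟨l, -, hl, hlS⟩ := exists_forall_adjoin_eq (X := adjoin ⊥ [z]) (P := (· ∈ ε.ker))
    (l := S.toList) fun s hs ↦ by
      obtain ⟨n, hn⟩ := hgen s (Subgroup.subset_closure (Finset.mem_toList.1 hs))
      refine ⟨s * (z ^ n)⁻¹, by simp [MonoidHom.mem_ker, hn], adjoin_singleton_mul ?_ s⟩
      exact inv_mem (zpow_mem (mem_adjoin_of_mem _ List.mem_cons_self) n)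
  refine ⟨adjoin ⊥ l, z, q, fg_adjoin Subgroup.FG.bot l, adjoin_le_iff.2 ⟨bot_le, hl⟩, hq, hzq, ?_⟩
  rw [← adjoin_cons_eq_adjoin_singleton, adjoin_cons, hlS, ← adjoin_cons,
    adjoin_cons_eq_adjoin_singleton, adjoin_bot_toList]
  exact (le_adjoin _ _).antisymm (adjoin_le_iff.2 ⟨le_rfl, List.forall_mem_singleton.2 hz⟩)

end Subgroups

theorem hasPreferredPresentation_of_fg_of_ne_bot {G : Type*} [Group G] [IsFreeGroup G]
    {W : Subgroup G} (hW : W.FG) (hne : W ≠ ⊥) : HasPreferredPresentation W := by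
  obtain ⟨b, hb, hbW⟩ := exists_basis_of_fg hW
  have hrank : rank W ≠ 0 := by
    intro h0
    have : IsEmpty (Fin (rank W)) := by rw [h0]; infer_instance
    exact hne (by rw [← hbW, MonoidHom.range_eq_bot_iff]; ext x; exact isEmptyElim x)
  obtain ⟨r, hr⟩ := Nat.exists_eq_succ_of_ne_zero hrank
  let w : Fin 0 → FreeGroup (Fin 0 ⊕ Fin r) := Fin.elim0
  refine ⟨0, r, w, injective_of_subsingleton _, ⟨?_⟩⟩
  have hrels : Subgroup.normalClosure (prefRels 0 r w) = ⊥ := by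
    rw [prefRels, Set.range_eq_empty, Subgroup.normalClosure_empty]
  let basis : Option (Fin 0 ⊕ Fin r) ≃ Fin (rank W) :=
    ((Equiv.emptySum (Fin 0) (Fin r)).optionCongr.trans (finSuccEquiv r).symm).trans
      (finCongr hr.symm)
  exact ((QuotientGroup.quotientMulEquivOfEq hrels).trans QuotientGroup.quotientBot).trans <|
    (FreeGroup.freeGroupCongr basis).trans <|
      (MonoidHom.ofInjective hb).trans (MulEquiv.subgroupCongr hbW)

theorem injective_lift_of_comp_eq {α β F G : Type*} [Group F] [Group G] {φ : F →* G}
    (hφ : Injective φ) {b : α → F} (hb : Injective (FreeGroup.lift b)) {ψ : FreeGroup β →* G}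
    {w : α → FreeGroup β} (hw : ∀ a, ψ (w a) = φ (b a)) : Injective (FreeGroup.lift w) := by
  have hcomp : ψ.comp (FreeGroup.lift w) = φ.comp (FreeGroup.lift b) := by
    ext
    simp [hw]
  exact Injective.of_comp (f := ψ) (by rw [← MonoidHom.coe_comp, hcomp]; exact hφ.comp hb)

theorem adjoin_map_congr {F M : Type*} [Group F] [Group M] {i : F →* M} {φ : F →* F} {τ : M}
    (hφ : ∀ g, τ * i g * τ⁻¹ = i (φ g)) {A B : Subgroup F}
    (hAB : ∀ K : Subgroup F, K.map φ ≤ K → (A ≤ K ↔ B ≤ K)) :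
    adjoin (A.map i) [τ] = adjoin (B.map i) [τ] := by
  refine eq_of_forall_ge_iff fun K ↦ ?_
  simp only [adjoin_le_iff, List.forall_mem_singleton, Subgroup.map_le_iff_le_comap]
  refine and_congr_left fun hτK ↦ hAB _ ?_
  rintro _ ⟨g, hg, rfl⟩
  rw [Subgroup.mem_comap, ← hφ]
  exact K.mul_mem (K.mul_mem hτK hg) (K.inv_mem hτK)

theorem hasPreferredPresentation_adjoin_map {κ M : Type*} [Group M] {i : FreeGroup κ →* M}
    (hi : Injective i) {τ : M} (hτ : ∀ n ∈ i.range, τ * n * τ⁻¹ ∈ i.range)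
    {ε : M →* Multiplicative ℤ} (hεi : ∀ g, ε (i g) = 1) (hετ : ε τ ≠ 1)
    {A : Subgroup (FreeGroup κ)} (hA : A.FG) :
    HasPreferredPresentation (adjoin (A.map i) [τ]) := by
  obtain ⟨φ, hφ, hconj⟩ := exists_conj_eq_map hi hτ
  obtain ⟨m, r, b, d, hbd, hφb, hAK⟩ := exists_injective_lift_iterate hφ hA
  choose w hw using hφb
  have hb : Injective (FreeGroup.lift b) := by
    have hrestrict : (FreeGroup.lift (Sum.elim b fun p : ℕ × Fin r ↦ φ^[p.1] (d p.2))).comp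
        (FreeGroup.map Sum.inl) = FreeGroup.lift b := by ext; simp
    rw [← hrestrict]
    exact hbd.comp (FreeGroup.map_injective Sum.inl_injective)
  have hrel (j : Fin m) : τ * i.comp (FreeGroup.lift (Sum.elim b d)) (FreeGroup.of (Sum.inl j)) *
      τ⁻¹ = i.comp (FreeGroup.lift (Sum.elim b d)) (w j) := by
    simp [hw, hconj]
  have hrange : (Torus.lift _ τ hrel).range = adjoin (A.map i) [τ] := by
    rw [Torus.range_lift, MonoidHom.range_comp, adjoin_map_congr hconj hAK]
  exact ⟨m, r, w, injective_lift_of_comp_eq hφ hb hw,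
    ⟨(MonoidHom.ofInjective (Torus.lift_injective hi hconj hεi hετ hbd hrel)).trans
      (MulEquiv.subgroupCongr hrange)⟩⟩

/-! ### Subgroups of mapping tori -/

section TorusSubgroups

variable {α β : Type u} {w : α → FreeGroup (α ⊕ β)}

theorem hasPreferredPresentation_of_le_ker_height (hw : Injective (FreeGroup.lift w))
    {H : Subgroup (Torus w)} (hH : H.FG) (hne : H ≠ ⊥) (hheight : H ≤ (Torus.height w).ker) :
    HasPreferredPresentation H := by
  obtain ⟨a, ha⟩ := Torus.exists_map_conj_le_telescope_range hH hheight
  obtain ⟨A, hA, hAH⟩ := exists_fg_map_eq (fg_map hH _) ha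
  let c := MulAut.conj (Torus.stable w ^ a)
  have hA_ne : A ≠ ⊥ := by
    rintro rfl
    rw [Subgroup.map_bot] at hAH
    exact hne ((Subgroup.map_eq_bot_iff_of_injective H c.injective).1 hAH.symm)
  rw [← hasPreferredPresentation_map_iff (i := c.toMonoidHom) c.injective, ← hAH,
    hasPreferredPresentation_map_iff (Torus.telescope_injective hw)]
  exact hasPreferredPresentation_of_fg_of_ne_bot hA hA_ne

theorem hasPreferredPresentation_of_not_le_ker_height (hw : Injective (FreeGroup.lift w))
    {H : Subgroup (Torus w)} (hH : H.FG) (hheight : ¬ H ≤ (Torus.height w).ker) :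
    HasPreferredPresentation H := by
  obtain ⟨K, z, q, hK, hKker, hq, hz, rfl⟩ := exists_eq_adjoin_of_not_le_ker hH hheight
  obtain ⟨a, hKa, v, hv⟩ := Torus.exists_conj_eq_telescope_mul_pow hK hKker hz
  obtain ⟨A, hA, hAK⟩ := exists_fg_map_eq (fg_map hK _) hKa
  let c := MulAut.conj (Torus.stable w ^ a)
  have hmap : (adjoin K [z]).map c.toMonoidHom =
      adjoin (A.map (Torus.telescope w)) [Torus.telescope w v * Torus.stable w ^ q] := by
    rw [map_adjoin, hAK, ← hv]
    rfl
  have hheight_ne : Torus.height w (Torus.telescope w v * Torus.stable w ^ q) ≠ 1 := by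
    rw [← hv, MulAut.conj_apply, map_mul, map_mul, map_inv, mul_inv_cancel_comm, hz]
    simpa using hq
  rw [← hasPreferredPresentation_map_iff (i := c.toMonoidHom) c.injective, hmap]
  exact hasPreferredPresentation_adjoin_map (Torus.telescope_injective hw)
    (fun _ ↦ mul_pow_mul_mul_inv_mem (Torus.stable_mul_mem_telescope_range w) ⟨v, rfl⟩ q)
    (Torus.height_telescope w) hheight_ne hA

theorem hasPreferredPresentation_of_subgroup_torus (hw : Injective (FreeGroup.lift w))
    {H : Subgroup (Torus w)} (hH : H.FG) (hne : H ≠ ⊥) : HasPreferredPresentation H := by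
  by_cases hheight : H ≤ (Torus.height w).ker
  · exact hasPreferredPresentation_of_le_ker_height hw hH hne hheight
  · exact hasPreferredPresentation_of_not_le_ker_height hw hH hheight

end TorusSubgroups

section FreeFactor

variable {I : Type} {J : Set I} {Ψ : freeFactor J →* FreeGroup I}

theorem injective_lift_freeFactor (hΨ : Injective Ψ) :
    Injective (FreeGroup.lift fun j : J ↦
      Ψ ⟨FreeGroup.of (j : I), Subgroup.subset_closure (Set.mem_image_of_mem _ j.2)⟩) := by
  let ι : FreeGroup J →* freeFactor J := FreeGroup.lift fun j ↦
    ⟨FreeGroup.of (j : I), Subgroup.subset_closure (Set.mem_image_of_mem _ j.2)⟩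
  have hι : Injective ι := by
    have hcomp : (freeFactor J).subtype.comp ι = FreeGroup.map Subtype.val := by
      ext j
      simp [ι]
    refine Injective.of_comp (f := (freeFactor J).subtype) ?_
    rw [← MonoidHom.coe_comp, hcomp]
    exact FreeGroup.map_injective Subtype.val_injective
  have hΨι : (FreeGroup.lift fun j : J ↦ Ψ ⟨FreeGroup.of (j : I),
      Subgroup.subset_closure (Set.mem_image_of_mem _ j.2)⟩) = Ψ.comp ι := by
    ext j
    simp [ι]
  rw [hΨι]
  exact hΨ.comp hι

theorem exists_mulEquiv_torus (hΨ : Injective Ψ) :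
    ∃ w : J → FreeGroup (J ⊕ ↥Jᶜ), Injective (FreeGroup.lift w) ∧
      Nonempty (MTRel J Ψ ≃* Torus w) := by
  classical
  let e : I ≃ J ⊕ ↥Jᶜ := (Equiv.Set.sumCompl J).symm
  let w : J → FreeGroup (J ⊕ ↥Jᶜ) := fun j ↦ FreeGroup.map e
    (Ψ ⟨FreeGroup.of (j : I), Subgroup.subset_closure (Set.mem_image_of_mem _ j.2)⟩)
  have hw : FreeGroup.lift w = (FreeGroup.map e).comp (FreeGroup.lift fun j : J ↦
      Ψ ⟨FreeGroup.of (j : I), Subgroup.subset_closure (Set.mem_image_of_mem _ j.2)⟩) := by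
    ext j
    simp [w]
  have hrels : FreeGroup.freeGroupCongr e.optionCongr '' mtRelsRel J Ψ = torusRels w := by
    rw [mtRelsRel, torusRels, ← Set.range_comp]
    congr 1
    ext1 j
    have he : e j = Sum.inl j := Equiv.Set.sumCompl_symm_apply_of_mem j.2
    simp [w, he, FreeGroup.map.comp, Function.comp_def]
  refine ⟨w, ?_, ⟨?_⟩⟩
  · rw [hw]
    exact (FreeGroup.map_injective e.injective).comp (injective_lift_freeFactor hΨ)
  · exact (PresentedGroup.equivPresentedGroup _ e.optionCongr).trans
      (QuotientGroup.quotientMulEquivOfEq (by rw [hrels]))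

end FreeFactor

end MappingTorus

open MappingTorus

/-- Every nontrivial finitely generated subgroup `H` of `M(Ψ)` admits a preferred
presentation `⟨s, x₁, …, x_m, y₁, …, y_r | s x_j s⁻¹ w_j⁻¹ (1 ≤ j ≤ m)⟩` in which
`x_j ↦ w_j` defines an injective homomorphism from the free group on the `x_j` to the
free group on the `x_j` and `y_k`. -/
theorem subgroup_has_preferred_presentation {I : Type} (J : Set I)
    (Ψ : freeFactor J →* FreeGroup I) (hΨ : Function.Injective Ψ)
    (H : Subgroup (MTRel J Ψ)) (hH : H.FG) (hne : H ≠ ⊥) :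
    ∃ (m r : ℕ) (w : Fin m → FreeGroup (Fin m ⊕ Fin r)),
      Function.Injective (FreeGroup.lift (fun j : Fin m => w j)) ∧
      Nonempty (PresentedGroup (prefRels m r w) ≃* H) := by
  obtain ⟨w, hw, ⟨e⟩⟩ := exists_mulEquiv_torus hΨ
  have hmap_ne : H.map e.toMonoidHom ≠ ⊥ :=
    (Subgroup.map_eq_bot_iff_of_injective H e.injective).not.2 hne
  exact (hasPreferredPresentation_map_iff e.injective).1
    (hasPreferredPresentation_of_subgroup_torus hw (fg_map hH _) hmap_ne)
end

section
/- If H is a finitely generated subgroup of M(Φ) that contains t, then there is a finite subset A of 𝔽 such that H is generated by {t} ∪ ι(A). -/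
/-- The relators `t eᵢ t⁻¹ Φ(eᵢ)⁻¹` of the mapping torus of an endomorphism `Φ` of the
free group on `I`; the generator `none` plays the role of the stable letter `t`. -/
def mtRels {I : Type} (Φ : FreeGroup I →* FreeGroup I) : Set (FreeGroup (Option I)) :=
  Set.range fun i : I =>
    FreeGroup.of (none : Option I) * FreeGroup.of (some i) * (FreeGroup.of (none : Option I))⁻¹ *
      (FreeGroup.map some (Φ (FreeGroup.of i)))⁻¹

/-- The mapping torus `M(Φ) = ⟨t, eᵢ (i ∈ I) | t eᵢ t⁻¹ Φ(eᵢ)⁻¹ (i ∈ I)⟩`. -/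
abbrev MT {I : Type} (Φ : FreeGroup I →* FreeGroup I) : Type := PresentedGroup (mtRels Φ)

/-- The stable letter `t` of the mapping torus. -/
def mtT {I : Type} (Φ : FreeGroup I →* FreeGroup I) : MT Φ := PresentedGroup.of none

/-- The natural homomorphism `ι : 𝔽 → M(Φ)`. -/
def mtι {I : Type} (Φ : FreeGroup I →* FreeGroup I) : FreeGroup I →* MT Φ :=
  (PresentedGroup.mk (mtRels Φ)).comp (FreeGroup.map some)

/-!
Since `t ι(x) = ι(Φ x) t`, positive powers of `t` can be moved to the right and negative ones to the
left, so every element of `M(Φ)` has the form `t⁻ᵃ ι(x) tᵇ`. A subgroup containing `t` contains this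
element if and only if it contains `ι(x)`, so in any finite generating set of `H` each generator may
be replaced by its middle factor once `t` is added.
-/

section SemiconjBy

variable {G M : Type*}

theorem semiconjBy_pow_iterate [Monoid M] {ι : G → M} {φ : G → G} {t : M}
    (hφ : ∀ x, SemiconjBy t (ι x) (ι (φ x))) (n : ℕ) (x : G) :
    SemiconjBy (t ^ n) (ι x) (ι (φ^[n] x)) := by
  induction n generalizing x with
  | zero => simp
  | succ n ih => exact pow_succ t n ▸ (ih (φ x)).mul_left (hφ x)

variable [Group M]

theorem inv_pow_mul_mul_pow_mem_iff {L : Subgroup M} {t : M} (ht : t ∈ L) (a b : ℕ) (x : M) :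
    (t ^ a)⁻¹ * x * t ^ b ∈ L ↔ x ∈ L := by
  rw [L.mul_mem_cancel_right (pow_mem ht b), L.mul_mem_cancel_left (inv_mem (pow_mem ht a))]

variable [Group G] {ι : G →* M} {φ : G → G} {t : M}

theorem exists_mul_inv_pow_mul_mul_pow_eq (hφ : ∀ x, SemiconjBy t (ι x) (ι (φ x)))
    (z : G) (a b : ℕ) (x : G) :
    ∃ y, ι z * ((t ^ a)⁻¹ * ι x * t ^ b) = (t ^ a)⁻¹ * ι y * t ^ b := by
  have push_left : (t ^ a)⁻¹ * ι (φ^[a] z) = ι z * (t ^ a)⁻¹ :=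
    (semiconjBy_pow_iterate hφ a z).inv_symm_left
  exact ⟨φ^[a] z * x, by simp only [map_mul, ← mul_assoc, push_left]⟩

theorem exists_eq_inv_pow_mul_mul_pow (hφ : ∀ x, SemiconjBy t (ι x) (ι (φ x))) {g : M}
    (hg : g ∈ Subgroup.closure ({t} ∪ Set.range ι)) :
    ∃ (a b : ℕ) (x : G), g = (t ^ a)⁻¹ * ι x * t ^ b := by
  induction hg using Subgroup.closure_induction_left with
  | one => exact ⟨0, 0, 1, by simp⟩
  | mul_left s hs g _ ih =>
    obtain ⟨a, b, x, rfl⟩ := ih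
    obtain rfl | ⟨z, rfl⟩ := hs
    · refine ⟨a, b + 1, φ x, ?_⟩
      calc s * ((s ^ a)⁻¹ * ι x * s ^ b)
          = (s ^ a)⁻¹ * (s * ι x) * s ^ b := by group
        _ = (s ^ a)⁻¹ * (ι (φ x) * s) * s ^ b := by rw [(hφ x).eq]
        _ = (s ^ a)⁻¹ * ι (φ x) * s ^ (b + 1) := by simp only [pow_succ', mul_assoc]
    · exact ⟨a, b, exists_mul_inv_pow_mul_mul_pow_eq hφ z a b x⟩
  | inv_mul_cancel s hs g _ ih =>
    obtain ⟨a, b, x, rfl⟩ := ih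
    obtain rfl | ⟨z, rfl⟩ := hs
    · exact ⟨a + 1, b, x, by simp only [pow_succ, mul_inv_rev, mul_assoc]⟩
    · exact ⟨a, b, map_inv ι z ▸ exists_mul_inv_pow_mul_mul_pow_eq hφ z⁻¹ a b x⟩

theorem fg_subgroup_containing_t_generated_general
    (hφ : ∀ x, SemiconjBy t (ι x) (ι (φ x))) {H : Subgroup M} (hH : H.FG) (ht : t ∈ H)
    (hle : H ≤ Subgroup.closure ({t} ∪ Set.range ι)) :
    ∃ A : Finset G, H = Subgroup.closure ({t} ∪ ι '' (A : Set G)) := by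
  classical
  obtain ⟨S, rfl⟩ := hH
  choose! a b x hx using fun g (hg : g ∈ Subgroup.closure (S : Set M)) =>
    exists_eq_inv_pow_mul_mul_pow hφ (hle hg)
  have mem_iff {L : Subgroup M} (htL : t ∈ L) {g : M} (hg : g ∈ S) : g ∈ L ↔ ι (x g) ∈ L := by
    conv_lhs => rw [hx g (Subgroup.subset_closure hg)]
    exact inv_pow_mul_mul_pow_mem_iff htL _ _ _
  refine ⟨S.image x, le_antisymm ?_ ?_⟩
  · refine (Subgroup.closure_le _).2 fun g hg => ?_
    have ht' : t ∈ Subgroup.closure ({t} ∪ ι '' (S.image x : Set G)) :=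
      Subgroup.subset_closure (.inl rfl)
    exact (mem_iff ht' hg).2 <|
      Subgroup.subset_closure (.inr ⟨x g, Finset.mem_image_of_mem x hg, rfl⟩)
  · rw [Subgroup.closure_le, Finset.coe_image, Set.union_subset_iff, Set.singleton_subset_iff]
    refine ⟨ht, ?_⟩
    rintro _ ⟨_, ⟨g, hg, rfl⟩, rfl⟩
    exact (mem_iff ht hg).1 (Subgroup.subset_closure hg)

end SemiconjBy

section MappingTorus

variable {I : Type} (Φ : FreeGroup I →* FreeGroup I)

theorem mtι_of (i : I) : mtι Φ (FreeGroup.of i) = PresentedGroup.of (some i) := by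
  simp [mtι, PresentedGroup.of]

theorem mtT_mul_mtι_of_mul_inv (i : I) :
    mtT Φ * mtι Φ (FreeGroup.of i) * (mtT Φ)⁻¹ = mtι Φ (Φ (FreeGroup.of i)) := by
  have relator_eq_one := PresentedGroup.one_of_mem (rels := mtRels Φ) ⟨i, rfl⟩
  rw [map_mul, map_inv, mul_inv_eq_one, map_mul, map_mul, map_inv] at relator_eq_one
  rwa [mtι_of]

theorem semiconjBy_mtT_mtι (x : FreeGroup I) :
    SemiconjBy (mtT Φ) (mtι Φ x) (mtι Φ (Φ x)) := by
  have conj_comp : (MulAut.conj (mtT Φ)).toMonoidHom.comp (mtι Φ) = (mtι Φ).comp Φ :=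
    FreeGroup.ext_hom _ _ (mtT_mul_mtι_of_mul_inv Φ)
  exact mul_inv_eq_iff_eq_mul.1 (DFunLike.congr_fun conj_comp x)

theorem closure_mtT_union_range_mtι :
    Subgroup.closure ({mtT Φ} ∪ Set.range (mtι Φ)) = ⊤ := by
  rw [eq_top_iff, ← PresentedGroup.closure_range_of (mtRels Φ)]
  refine Subgroup.closure_mono ?_
  rintro _ ⟨_ | i, rfl⟩
  · exact .inl rfl
  · exact .inr ⟨FreeGroup.of i, mtι_of Φ i⟩

end MappingTorus

/-- If a finitely generated subgroup `H` of `M(Φ)` contains `t`, then there is a finite set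
`A ⊆ 𝔽` such that `H = ⟨t, A⟩`. -/
theorem fg_subgroup_containing_t_generated {I : Type} (Φ : FreeGroup I →* FreeGroup I)
    (hΦ : Function.Injective Φ) (H : Subgroup (MT Φ)) (hH : H.FG) (ht : mtT Φ ∈ H) :
    ∃ A : Finset (FreeGroup I),
      H = Subgroup.closure ({mtT Φ} ∪ mtι Φ '' (A : Set (FreeGroup I))) :=
  fg_subgroup_containing_t_generated_general (semiconjBy_mtT_mtι Φ) hH ht
    (closure_mtT_union_range_mtι Φ ▸ le_top)
end
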